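/- Let Γ be an unbalanced signed bipartite graph of order n ≥ 6 containing no negative 4-cycle. Then ρ(Γ) ≤ (n−6+sqrt((n−2)(n+6)))/4 if n is even, and ρ(Γ) ≤ sqrt( (n²−4n+11 + sqrt((n²−4n+11)² − 64(n−2)(n−4)))/8 ) if n is odd, with equality if and only if Γ is switching isomorphic to Γ_{⌊n/2⌋,⌈n/2⌉}. -/

import Mathlib

open Matrix Finset

structure SignedGraph (V : Type*) where
  G : SimpleGraph V
  sign : V → V → ℝ
  sign_symm : ∀ u v, sign u v = sign v u
  sign_edge : ∀ u v, G.Adj u v → sign u v = 1 ∨ sign u v = -1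
  sign_nonedge : ∀ u v, ¬ G.Adj u v → sign u v = 0

def SignedGraph.adjMatrix {V : Type*} (Γ : SignedGraph V) : Matrix V V ℝ :=
  Matrix.of fun u v => Γ.sign u v

def SignedGraph.edgeSign {V : Type*} (Γ : SignedGraph V) : Sym2 V → ℝ :=
  Sym2.lift ⟨Γ.sign, Γ.sign_symm⟩

def SignedGraph.IsNegCycle {V : Type*} (Γ : SignedGraph V) {u : V}
    (w : Γ.G.Walk u u) : Prop :=
  w.IsCycle ∧ (w.edges.map Γ.edgeSign).prod = -1

def SignedGraph.Unbalanced {V : Type*} (Γ : SignedGraph V) : Prop :=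
  ∃ (u : V) (w : Γ.G.Walk u u), Γ.IsNegCycle w

/-- Sign of the edge between the `x`-th vertex of the `r`-side and the `y`-th vertex of the
`s`-side of `Γ_{r,s}`: index `r-1` on the left is `u₁`, index `0` on the left is `u`,
index `s-1` on the right is `v₁`, index `0` on the right is `v`. -/
def gammaSign (r s : ℕ) (x : Fin r) (y : Fin s) : ℝ :=
  if (x : ℕ) = r - 1 then (if (y : ℕ) = 0 then 1 else if (y : ℕ) = s - 1 then -1 else 0)
  else if (x : ℕ) = 0 then (if (y : ℕ) = 0 then 0 else 1)
  else if (y : ℕ) = s - 1 then 0 else 1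

/-- The adjacency matrix of the signed graph `Γ_{r,s}`. -/
def gammaMatrix (r s : ℕ) : Matrix (Fin r ⊕ Fin s) (Fin r ⊕ Fin s) ℝ :=
  Matrix.of fun a b =>
    match a, b with
    | Sum.inl x, Sum.inr y => gammaSign r s x y
    | Sum.inr y, Sum.inl x => gammaSign r s x y
    | _, _ => 0

/-!
A switching makes an eigenvector `(x, y)` for the spectral radius `ρ` nonnegative, and among these
switchings one can be chosen for which each vertex on a negative edge also lies on a positive edge.
Let `uv` be a negative edge, `N` and `M` the positive neighbourhoods of `v` and `u`, and pick
`u₀ ∈ N`, `v₀ ∈ M`. As there is no negative 4-cycle, no edge between `N` and `M` is positive, so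
the biadjacency matrix is at most the matrix with `uv` as its only negative edge and with all
positive edges that `N` and `M` allow. The eigenvalue equations at `u` and `v` show that shrinking
`N` and `M` to `{u₀}` and `{v₀}` does not decrease the quadratic form at `(x, y)`. The matrix
obtained in this way is that of `Γ_{r,s}`, where `r` and `s` are the sizes of the two colour
classes, hence `ρ ≤ ρ(Γ_{r,s})`, and equality propagates back through all the inequalities. The
biadjacency matrix of `Γ_{r,s}` is a difference of two matrices of rank one, so its nonzero
singular values are the roots of an explicit quartic; the largest root is maximal, among all
`r + s = n`, for the balanced partition.
-/

/-- A vector with entries `±1`. Conjugating a matrix by the corresponding diagonal matrix is a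
switching. -/
def IsSignVector {ι : Type*} (ε : ι → ℝ) : Prop :=
  ∀ i, ε i = 1 ∨ ε i = -1

namespace IsSignVector

variable {ι : Type*} {ε : ι → ℝ}

theorem apply_mul_self (hε : IsSignVector ε) (i : ι) : ε i * ε i = 1 := by
  rcases hε i with h | h <;> rw [h] <;> norm_num

theorem mul_mul_cancel_left (hε : IsSignVector ε) (x : ι → ℝ) : ε * (ε * x) = x := by
  ext i
  simp only [Pi.mul_apply, ← mul_assoc, hε.apply_mul_self, one_mul]

theorem mul_ne_zero (hε : IsSignVector ε) {x : ι → ℝ} (hx : x ≠ 0) : ε * x ≠ 0 := by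
  intro h
  rw [← hε.mul_mul_cancel_left x, h, mul_zero] at hx
  exact hx rfl

theorem mulVec_mul [Fintype ι] (hε : IsSignVector ε) {A B : Matrix ι ι ℝ}
    (hB : ∀ i j, B i j = ε i * A i j * ε j) (x : ι → ℝ) : B *ᵥ (ε * x) = ε * A *ᵥ x := by
  ext i
  simp only [mulVec, dotProduct, Pi.mul_apply, mul_sum]
  refine sum_congr rfl fun j _ ↦ ?_
  linear_combination (ε j * x j) * hB i j + ε i * A i j * x j * hε.apply_mul_self j

theorem mulVec_mul_eq_smul [Fintype ι] (hε : IsSignVector ε) {A B : Matrix ι ι ℝ}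
    (hB : ∀ i j, B i j = ε i * A i j * ε j) {x : ι → ℝ} {θ : ℝ} (hx : A *ᵥ x = θ • x) :
    B *ᵥ (ε * x) = θ • (ε * x) := by
  rw [hε.mulVec_mul hB, hx, mul_smul_comm]

theorem add_single_neg_two_mul [DecidableEq ι] (hε : IsSignVector ε) (u : ι) :
    IsSignVector (ε + Pi.single u (-2 * ε u)) := by
  intro i
  obtain rfl | hi := eq_or_ne i u
  · rcases hε i with h | h <;> norm_num [h]
  · simpa [hi] using hε i

theorem setOf_finite (ι : Type*) [Finite ι] : {ε : ι → ℝ | IsSignVector ε}.Finite :=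
  (Set.Finite.pi' fun _ ↦ Set.toFinite ({1, -1} : Set ℝ)).subset fun _ hε ↦ hε

end IsSignVector

theorem exists_isSignVector_mul_nonneg {ι : Type*} (x : ι → ℝ) :
    ∃ ε, IsSignVector ε ∧ 0 ≤ ε * x := by
  refine ⟨fun i ↦ if 0 ≤ x i then 1 else -1, fun i ↦ ?_, fun i ↦ ?_⟩
  · exact ite_eq_or_eq _ _ _
  · by_cases h : 0 ≤ x i
    · simp [h]
    · simpa [h] using (not_le.mp h).le

section PositiveSwitching

variable {V : Type*} [Fintype V] {A : Matrix V V ℝ}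

theorem dotProduct_mulVec_add_single [DecidableEq V] (hA : A.IsSymm) (x : V → ℝ) (u : V) (t : ℝ) :
    (x + Pi.single u t) ⬝ᵥ A *ᵥ (x + Pi.single u t)
      = x ⬝ᵥ A *ᵥ x + 2 * t * (A *ᵥ x) u + t ^ 2 * A u u := by
  have hcross : x ⬝ᵥ A *ᵥ Pi.single u t = t * (A *ᵥ x) u := by
    rw [dotProduct_mulVec, ← mulVec_transpose, hA.eq, dotProduct_single, mul_comm]
  rw [mulVec_add, dotProduct_add, add_dotProduct, add_dotProduct, hcross, single_dotProduct,
    single_dotProduct, mulVec_single]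
  simp only [Pi.smul_apply, col_apply, MulOpposite.smul_eq_mul_unop, MulOpposite.unop_op]
  ring

/-- Among the switchings that make the eigenvector nonnegative, one maximising the sum of the
entries works: a vertex with a negative but no positive edge has eigenvector entry zero, and
switching it would increase the sum. -/
theorem exists_isSignVector_forall_exists_pos (hA : A.IsSymm) (hdiag : ∀ v, A v v = 0)
    {ρ : ℝ} (hρ : 0 < ρ) {x : V → ℝ} (hx : A *ᵥ x = ρ • x) :
    ∃ ε, IsSignVector ε ∧ 0 ≤ ε * x ∧
      ∀ u w, ε u * A u w * ε w < 0 → ∃ v, 0 < ε u * A u v * ε v := by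
  classical
  obtain ⟨ε, ⟨hε, hεx⟩, hmax⟩ :=
    Set.exists_max_image {ε | IsSignVector ε ∧ 0 ≤ ε * x} (fun ε ↦ ε ⬝ᵥ A *ᵥ ε)
      ((IsSignVector.setOf_finite V).subset fun _ h ↦ h.1) (exists_isSignVector_mul_nonneg x)
  refine ⟨ε, hε, hεx, fun u w huw ↦ ?_⟩
  by_contra! hrow
  have hxu : x u = 0 := by
    have hle : ρ * (ε u * x u) ≤ 0 := by
      calc ρ * (ε u * x u) = ε u * (A *ᵥ x) u := by rw [hx, Pi.smul_apply, smul_eq_mul]; ring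
        _ = ∑ v, ε u * A u v * ε v * (ε * x) v := by
          simp only [mulVec, dotProduct, mul_sum, Pi.mul_apply]
          refine sum_congr rfl fun v _ ↦ ?_
          linear_combination -(ε u * A u v * x v) * hε.apply_mul_self v
        _ ≤ 0 := sum_nonpos fun v _ ↦ mul_nonpos_of_nonpos_of_nonneg (hrow v) (hεx v)
    have h0 : ε u * x u = 0 := le_antisymm (nonpos_of_mul_nonpos_right hle hρ) (hεx u)
    rw [← one_mul (x u), ← hε.apply_mul_self u, mul_assoc, h0, mul_zero]
  have hflip_mem : 0 ≤ (ε + Pi.single u (-2 * ε u)) * x := by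
    rwa [add_mul, ← Pi.single_mul_left, hxu, mul_zero, Pi.single_zero, add_zero]
  have hrow_neg : ε u * (A *ᵥ ε) u < 0 := by
    rw [mulVec, dotProduct, mul_sum]
    simp only [← mul_assoc]
    exact sum_neg' (fun v _ ↦ hrow v) ⟨w, mem_univ w, huw⟩
  have hflip := hmax _ ⟨hε.add_single_neg_two_mul u, hflip_mem⟩
  rw [dotProduct_mulVec_add_single hA, hdiag] at hflip
  linarith

end PositiveSwitching

theorem isHermitian_fromBlocks_zero {X Y : Type*} (S : Matrix X Y ℝ) :
    (fromBlocks 0 S Sᵀ 0).IsHermitian :=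
  isHermitian_zero.fromBlocks S.conjTranspose_eq_transpose_of_trivial isHermitian_zero

section SingularPair

variable {X Y : Type*} [Fintype X] [Fintype Y]

/-- `x` and `y` are left and right singular vectors of `S` for `θ`, of arbitrary sign; they need
not be normalised, and one of them may vanish. Equivalently, `(x, y)` is an eigenvector of
`fromBlocks 0 S Sᵀ 0` for the eigenvalue `θ`. -/
structure IsSingularPair (S : Matrix X Y ℝ) (θ : ℝ) (x : X → ℝ) (y : Y → ℝ) : Prop where
  ne_zero : Sum.elim x y ≠ 0
  mulVec_eq : S *ᵥ y = θ • x
  transpose_mulVec_eq : Sᵀ *ᵥ x = θ • y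

namespace IsSingularPair

variable {S : Matrix X Y ℝ} {θ : ℝ} {x : X → ℝ} {y : Y → ℝ}

theorem symm (h : IsSingularPair S θ x y) : IsSingularPair Sᵀ θ y x where
  ne_zero h0 := h.ne_zero <| by
    ext (a | b)
    exacts [congrFun h0 (.inr a), congrFun h0 (.inl b)]
  mulVec_eq := h.transpose_mulVec_eq
  transpose_mulVec_eq := h.mulVec_eq

theorem mulVec_apply (h : IsSingularPair S θ x y) (a : X) : (S *ᵥ y) a = θ * x a :=
  congrFun h.mulVec_eq a

theorem dotProduct_add_dotProduct_pos (h : IsSingularPair S θ x y) : 0 < x ⬝ᵥ x + y ⬝ᵥ y := by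
  rw [← sumElim_dotProduct_sumElim]
  exact dotProduct_self_star_pos_iff.mpr h.ne_zero

theorem dotProduct_mulVec (h : IsSingularPair S θ x y) : x ⬝ᵥ S *ᵥ y = θ * (x ⬝ᵥ x) := by
  rw [h.mulVec_eq, dotProduct_smul, smul_eq_mul]

theorem two_mul_dotProduct_mulVec (h : IsSingularPair S θ x y) :
    2 * (x ⬝ᵥ S *ᵥ y) = θ * (x ⬝ᵥ x + y ⬝ᵥ y) := by
  linarith [h.dotProduct_mulVec, h.symm.dotProduct_mulVec, dotProduct_transpose_mulVec S y x]

end IsSingularPair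

theorem isSingularPair_iff_fromBlocks {S : Matrix X Y ℝ} {θ : ℝ} {x : X → ℝ} {y : Y → ℝ} :
    IsSingularPair S θ x y ↔
      Sum.elim x y ≠ 0 ∧ fromBlocks 0 S Sᵀ 0 *ᵥ Sum.elim x y = θ • Sum.elim x y := by
  have hsmul : θ • Sum.elim x y = Sum.elim (θ • x) (θ • y) := by ext (a | b) <;> rfl
  rw [hsmul, fromBlocks_mulVec, Sum.elim_eq_iff]
  simp only [Sum.elim_comp_inl, Sum.elim_comp_inr, zero_mulVec, zero_add, add_zero]
  exact ⟨fun h ↦ ⟨h.ne_zero, h.mulVec_eq, h.transpose_mulVec_eq⟩, fun h ↦ ⟨h.1, h.2.1, h.2.2⟩⟩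

theorem dotProduct_fromBlocks_mulVec (S : Matrix X Y ℝ) (x : X → ℝ) (y : Y → ℝ) :
    Sum.elim x y ⬝ᵥ fromBlocks 0 S Sᵀ 0 *ᵥ Sum.elim x y = 2 * (x ⬝ᵥ S *ᵥ y) := by
  simp only [fromBlocks_mulVec, Sum.elim_comp_inl, Sum.elim_comp_inr, zero_mulVec, zero_add,
    add_zero, sumElim_dotProduct_sumElim, dotProduct_transpose_mulVec, two_mul]

theorem exists_mulVec_eq_eigenvalue_smul {ι : Type*} [Fintype ι] [DecidableEq ι]
    {A : Matrix ι ι ℝ} (hA : A.IsHermitian) (i : ι) :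
    ∃ z : ι → ℝ, z ≠ 0 ∧ A *ᵥ z = hA.eigenvalues i • z := by
  refine ⟨_, fun h ↦ hA.eigenvectorBasis.orthonormal.ne_zero i ?_, hA.mulVec_eigenvectorBasis i⟩
  ext j
  exact congrFun h j

theorem exists_eigenvalues_eq_of_mulVec_eq_smul {ι : Type*} [Fintype ι] [DecidableEq ι]
    {A : Matrix ι ι ℝ} (hA : A.IsHermitian) {θ : ℝ} {x : ι → ℝ} (hx0 : x ≠ 0)
    (hx : A *ᵥ x = θ • x) :
    ∃ i, hA.eigenvalues i = θ := by
  rw [← Set.mem_range, ← hA.spectrum_real_eq_range_eigenvalues, ← spectrum_toLin']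
  exact (Module.End.hasEigenvalue_of_hasEigenvector
    ⟨Module.End.mem_eigenspace_iff.mpr hx, hx0⟩).mem_spectrum

theorem posSemidef_smul_one_sub {ι : Type*} [Fintype ι] [DecidableEq ι] {A : Matrix ι ι ℝ}
    (hA : A.IsHermitian) {R : ℝ} (hR : ∀ i, hA.eigenvalues i ≤ R) :
    (R • (1 : Matrix ι ι ℝ) - A).PosSemidef := by
  rw [posSemidef_iff_isHermitian_and_spectrum_nonneg, ← Algebra.algebraMap_eq_smul_one,
    ← spectrum.singleton_sub_eq, hA.spectrum_real_eq_range_eigenvalues]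
  refine ⟨.sub (by simp [IsHermitian, Algebra.algebraMap_eq_smul_one]) hA, ?_⟩
  rintro _ ⟨_, rfl, _, ⟨i, rfl⟩, rfl⟩
  exact sub_nonneg.mpr (hR i)

theorem posSemidef_smul_one_sub_fromBlocks [DecidableEq X] [DecidableEq Y] {S : Matrix X Y ℝ}
    {R : ℝ} (hR : ∀ θ x y, IsSingularPair S θ x y → θ ≤ R) :
    (R • (1 : Matrix (X ⊕ Y) (X ⊕ Y) ℝ) - fromBlocks 0 S Sᵀ 0).PosSemidef := by
  refine posSemidef_smul_one_sub (isHermitian_fromBlocks_zero S) fun i ↦ ?_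
  obtain ⟨z, hz, hSz⟩ := exists_mulVec_eq_eigenvalue_smul (isHermitian_fromBlocks_zero S) i
  rw [← Sum.elim_comp_inl_inr z] at hz hSz
  exact hR _ _ _ (isSingularPair_iff_fromBlocks.mpr ⟨hz, hSz⟩)

theorem dotProduct_smul_one_sub_fromBlocks_mulVec [DecidableEq X] [DecidableEq Y]
    (S : Matrix X Y ℝ) (R : ℝ) (x : X → ℝ) (y : Y → ℝ) :
    star (Sum.elim x y) ⬝ᵥ (R • (1 : Matrix (X ⊕ Y) (X ⊕ Y) ℝ) - fromBlocks 0 S Sᵀ 0) *ᵥ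
        Sum.elim x y = R * (x ⬝ᵥ x + y ⬝ᵥ y) - 2 * (x ⬝ᵥ S *ᵥ y) := by
  rw [star_trivial, sub_mulVec, dotProduct_sub, dotProduct_fromBlocks_mulVec, smul_mulVec,
    one_mulVec, dotProduct_smul, sumElim_dotProduct_sumElim, smul_eq_mul]

theorem two_mul_dotProduct_mulVec_le {S : Matrix X Y ℝ} {R : ℝ}
    (hR : ∀ θ x y, IsSingularPair S θ x y → θ ≤ R) (x : X → ℝ) (y : Y → ℝ) :
    2 * (x ⬝ᵥ S *ᵥ y) ≤ R * (x ⬝ᵥ x + y ⬝ᵥ y) := by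
  classical
  have h := (posSemidef_smul_one_sub_fromBlocks hR).dotProduct_mulVec_nonneg (Sum.elim x y)
  rwa [dotProduct_smul_one_sub_fromBlocks_mulVec, sub_nonneg] at h

theorem isSingularPair_of_two_mul_dotProduct_mulVec_eq {S : Matrix X Y ℝ} {R : ℝ}
    (hR : ∀ θ x y, IsSingularPair S θ x y → θ ≤ R) {x : X → ℝ} {y : Y → ℝ}
    (hne : Sum.elim x y ≠ 0) (h : 2 * (x ⬝ᵥ S *ᵥ y) = R * (x ⬝ᵥ x + y ⬝ᵥ y)) :
    IsSingularPair S R x y := by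
  classical
  have hker := ((posSemidef_smul_one_sub_fromBlocks hR).dotProduct_mulVec_zero_iff _).mp
    ((dotProduct_smul_one_sub_fromBlocks_mulVec S R x y).trans (sub_eq_zero.mpr h.symm))
  rw [sub_mulVec, smul_mulVec, one_mulVec, sub_eq_zero] at hker
  exact isSingularPair_iff_fromBlocks.mpr ⟨hne, hker.symm⟩

end SingularPair

section RankTwo

/-- The matrix `θ² - G J G' J`, where `G` and `G'` are the Gram matrices of `(p, q)` and of
`(p', q')` and `J = diag(1, -1)`. Its determinant is the polynomial whose nonzero roots are the
signed singular values of `vecMulVec p p' - vecMulVec q q'`. -/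
def rankTwoMatrix {X Y : Type*} [Fintype X] [Fintype Y] (p q : X → ℝ) (p' q' : Y → ℝ) (θ : ℝ) :
    Matrix (Fin 2) (Fin 2) ℝ :=
  !![θ ^ 2 - p ⬝ᵥ p * p' ⬝ᵥ p' + p ⬝ᵥ q * p' ⬝ᵥ q', p ⬝ᵥ p * p' ⬝ᵥ q' - p ⬝ᵥ q * q' ⬝ᵥ q';
    q ⬝ᵥ q * p' ⬝ᵥ q' - p ⬝ᵥ q * p' ⬝ᵥ p', θ ^ 2 - q ⬝ᵥ q * q' ⬝ᵥ q' + p ⬝ᵥ q * p' ⬝ᵥ q']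

theorem vecMulVec_sub_vecMulVec_mulVec {X Y : Type*} [Fintype Y] (p q : X → ℝ)
    (p' q' y : Y → ℝ) :
    (vecMulVec p p' - vecMulVec q q') *ᵥ y = (p' ⬝ᵥ y) • p - (q' ⬝ᵥ y) • q := by
  simp only [sub_mulVec, vecMulVec_mulVec, op_smul_eq_smul]

theorem transpose_vecMulVec_sub_vecMulVec {X Y : Type*} (p q : X → ℝ) (p' q' : Y → ℝ) :
    (vecMulVec p p' - vecMulVec q q')ᵀ = vecMulVec p' p - vecMulVec q' q := by
  rw [transpose_sub, transpose_vecMulVec, transpose_vecMulVec]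

variable {X Y : Type*} [Fintype X] [Fintype Y] {p q : X → ℝ} {p' q' : Y → ℝ} {θ : ℝ}

theorem isSingularPair_rankTwo_iff {x : X → ℝ} {y : Y → ℝ} :
    IsSingularPair (vecMulVec p p' - vecMulVec q q') θ x y ↔
      Sum.elim x y ≠ 0 ∧ θ • x = (p' ⬝ᵥ y) • p - (q' ⬝ᵥ y) • q ∧
        θ • y = (p ⬝ᵥ x) • p' - (q ⬝ᵥ x) • q' := by
  rw [← vecMulVec_sub_vecMulVec_mulVec p q, ← vecMulVec_sub_vecMulVec_mulVec p' q',
    ← transpose_vecMulVec_sub_vecMulVec p q]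
  exact ⟨fun h ↦ ⟨h.ne_zero, h.mulVec_eq.symm, h.transpose_mulVec_eq.symm⟩,
    fun h ↦ ⟨h.1, h.2.1.symm, h.2.2.symm⟩⟩

theorem dotProduct_smul_sub_smul (w : X → ℝ) (a b : ℝ) :
    w ⬝ᵥ (a • p - b • q) = a * w ⬝ᵥ p - b * w ⬝ᵥ q := by
  simp only [dotProduct_smul, dotProduct_sub, smul_eq_mul]

theorem rankTwoMatrix_mulVec_eq_zero_iff {a b : ℝ} :
    rankTwoMatrix p q p' q' θ *ᵥ ![a, b] = 0 ↔
      θ ^ 2 * a = p ⬝ᵥ p * (a * p' ⬝ᵥ p' - b * p' ⬝ᵥ q')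
          - p ⬝ᵥ q * (a * p' ⬝ᵥ q' - b * q' ⬝ᵥ q') ∧
        θ ^ 2 * b = p ⬝ᵥ q * (a * p' ⬝ᵥ p' - b * p' ⬝ᵥ q')
          - q ⬝ᵥ q * (a * p' ⬝ᵥ q' - b * q' ⬝ᵥ q') := by
  rw [funext_iff, Fin.forall_fin_two, ← sub_eq_zero (a := θ ^ 2 * a),
    ← sub_eq_zero (a := θ ^ 2 * b)]
  simp only [rankTwoMatrix, cons_mulVec, cons_dotProduct, dotProduct_of_isEmpty, add_zero,
    cons_val_zero, cons_val_one, vecHead, vecTail, Function.comp_apply, Pi.zero_apply,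
    Fin.succ_zero_eq_one]
  constructor <;> rintro ⟨h₀, h₁⟩ <;> constructor
  · linear_combination h₀
  · linear_combination h₁
  · linear_combination h₀
  · linear_combination h₁

theorem IsSingularPair.rankTwoMatrix_mulVec_eq_zero {x : X → ℝ} {y : Y → ℝ}
    (h : IsSingularPair (vecMulVec p p' - vecMulVec q q') θ x y) :
    rankTwoMatrix p q p' q' θ *ᵥ ![p ⬝ᵥ x, q ⬝ᵥ x] = 0 := by
  obtain ⟨-, hx, hy⟩ := isSingularPair_rankTwo_iff.mp h
  have hwx (w : X → ℝ) := congrArg (w ⬝ᵥ ·) hx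
  have hwy (w : Y → ℝ) := congrArg (w ⬝ᵥ ·) hy
  simp only [dotProduct_smul_sub_smul, dotProduct_smul, smul_eq_mul] at hwx hwy
  rw [rankTwoMatrix_mulVec_eq_zero_iff, dotProduct_comm p' q']
  constructor
  · linear_combination θ * hwx p + p ⬝ᵥ p * hwy p' - p ⬝ᵥ q * hwy q'
      + (q ⬝ᵥ x * p ⬝ᵥ p) * dotProduct_comm q' p'
  · rw [dotProduct_comm p q]
    linear_combination θ * hwx q + q ⬝ᵥ p * hwy p' - q ⬝ᵥ q * hwy q'
      + (q ⬝ᵥ x * q ⬝ᵥ p) * dotProduct_comm q' p'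

theorem exists_isSingularPair_of_rankTwoMatrix_mulVec_eq_zero (hθ : θ ≠ 0) {a b : ℝ}
    (hne : ![a, b] ≠ 0) (h : rankTwoMatrix p q p' q' θ *ᵥ ![a, b] = 0) :
    ∃ x y, IsSingularPair (vecMulVec p p' - vecMulVec q q') θ x y := by
  obtain ⟨ha, hb⟩ := rankTwoMatrix_mulVec_eq_zero_iff.mp h
  let y : Y → ℝ := θ⁻¹ • (a • p' - b • q')
  let x : X → ℝ := θ⁻¹ • ((p' ⬝ᵥ y) • p - (q' ⬝ᵥ y) • q)
  have hwx (w : X → ℝ) : θ ^ 2 * w ⬝ᵥ x =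
      w ⬝ᵥ p * (a * p' ⬝ᵥ p' - b * p' ⬝ᵥ q') - w ⬝ᵥ q * (a * p' ⬝ᵥ q' - b * q' ⬝ᵥ q') := by
    simp only [x, y, dotProduct_smul, dotProduct_smul_sub_smul, smul_eq_mul,
      dotProduct_comm q' p']
    field_simp
  have hpx : p ⬝ᵥ x = a := mul_left_cancel₀ (pow_ne_zero 2 hθ) ((hwx p).trans ha.symm)
  have hqx : q ⬝ᵥ x = b := by
    refine mul_left_cancel₀ (pow_ne_zero 2 hθ) (.trans ?_ hb.symm)
    rw [hwx, dotProduct_comm q p]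
  refine ⟨x, y, isSingularPair_rankTwo_iff.mpr ⟨fun hxy ↦ hne ?_, ?_, ?_⟩⟩
  · have hx0 : x = 0 := funext fun i ↦ congrFun hxy (.inl i)
    rw [← hpx, ← hqx, hx0, dotProduct_zero, dotProduct_zero]
    exact cons_eq_zero_iff.mpr ⟨rfl, cons_eq_zero_iff.mpr ⟨rfl, Subsingleton.elim _ _⟩⟩
  · rw [smul_inv_smul₀ hθ]
  · rw [smul_inv_smul₀ hθ, hpx, hqx]

theorem exists_isSingularPair_rankTwo_iff (hθ : θ ≠ 0) :
    (∃ x y, IsSingularPair (vecMulVec p p' - vecMulVec q q') θ x y) ↔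
      (rankTwoMatrix p q p' q' θ).det = 0 := by
  rw [← exists_mulVec_eq_zero_iff]
  constructor
  · rintro ⟨x, y, h⟩
    refine ⟨_, fun h0 ↦ ?_, h.rankTwoMatrix_mulVec_eq_zero⟩
    obtain ⟨hne, hx, hy⟩ := isSingularPair_rankTwo_iff.mp h
    have hpx : p ⬝ᵥ x = 0 := congrFun h0 0
    have hqx : q ⬝ᵥ x = 0 := congrFun h0 1
    have hy0 : y = 0 := by simpa [hpx, hqx, hθ] using hy
    have hx0 : x = 0 := by simpa [hy0, hθ] using hx
    exact hne (by simp [hx0, hy0])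
  · rintro ⟨v, hv, h⟩
    rw [← FinVec.etaExpand_eq v] at hv h
    exact exists_isSingularPair_of_rankTwoMatrix_mulVec_eq_zero hθ hv h

end RankTwo

section NegEdgeBiadj

variable {X Y : Type*} [DecidableEq X] [DecidableEq Y]

/-- The signed indicator vector of the neighbours of a vertex: `-1` at its only negative
neighbour `u` and `1` on its set `N` of positive neighbours. -/
noncomputable def signedNbr (u : X) (N : Finset X) : X → ℝ :=
  Set.indicator (N : Set X) 1 - Pi.single u 1

/-- The biadjacency matrix of the signed bipartite graph whose only negative edge is `uv`, in which
`N` and `M` are the sets of positive neighbours of `v` and of `u`, and in which `a ≠ u` and `b ≠ v`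
are joined by a positive edge unless `a ∈ N` and `b ∈ M`. It is the largest such graph without
negative `4`-cycles, and it is `Γ_{r,s}` when `N` and `M` are singletons. Writing it as a difference
of two matrices of rank one makes its spectrum computable. -/
noncomputable def negEdgeBiadj (u : X) (v : Y) (N : Finset X) (M : Finset Y) : Matrix X Y ℝ :=
  vecMulVec (1 - Pi.single u 1) (1 - Pi.single v 1) - vecMulVec (signedNbr u N) (signedNbr v M)

/-- The polynomial whose nonzero roots are the nonzero eigenvalues of `Γ_{r,s}`. -/
def gammaPoly (r s θ : ℝ) : ℝ :=
  θ ^ 4 - ((r - 1) * (s - 1) + 2) * θ ^ 2 + (2 * r - 3) * (2 * s - 3)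

theorem transpose_negEdgeBiadj (u : X) (v : Y) (N : Finset X) (M : Finset Y) :
    (negEdgeBiadj u v N M)ᵀ = negEdgeBiadj v u M N :=
  transpose_vecMulVec_sub_vecMulVec _ _ _ _

theorem signedNbr_apply (u : X) (N : Finset X) (a : X) :
    signedNbr u N a = (if a ∈ N then 1 else 0) - if a = u then 1 else 0 := by
  simp [signedNbr, Set.indicator_apply, Pi.single_apply]

theorem negEdgeBiadj_apply_left {u : X} {N : Finset X} (hu : u ∉ N) (v : Y) (M : Finset Y)
    (b : Y) : negEdgeBiadj u v N M u b = signedNbr v M b := by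
  simp [negEdgeBiadj, vecMulVec_apply, signedNbr_apply u, hu]

theorem negEdgeBiadj_apply_right {v : Y} {M : Finset Y} (hv : v ∉ M) (u : X) (N : Finset X)
    (a : X) : negEdgeBiadj u v N M a v = signedNbr u N a := by
  rw [← negEdgeBiadj_apply_left hv u N a, ← transpose_negEdgeBiadj, transpose_apply]

theorem negEdgeBiadj_apply_of_ne {u a : X} {v b : Y} (ha : a ≠ u) (hb : b ≠ v) (N : Finset X)
    (M : Finset Y) :
    negEdgeBiadj u v N M a b = if a ∈ N ∧ b ∈ M then 0 else 1 := by
  by_cases haN : a ∈ N <;> by_cases hbM : b ∈ M <;>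
    simp [negEdgeBiadj, vecMulVec_apply, signedNbr_apply, ha, hb, haN, hbM]

theorem one_sub_single_dotProduct [Fintype X] (u : X) (x : X → ℝ) :
    (1 - Pi.single u 1) ⬝ᵥ x = ∑ a, x a - x u := by
  rw [sub_dotProduct, one_dotProduct, single_one_dotProduct]

theorem signedNbr_dotProduct [Fintype X] (u : X) (N : Finset X) (x : X → ℝ) :
    signedNbr u N ⬝ᵥ x = ∑ a ∈ N, x a - x u := by
  rw [signedNbr, sub_dotProduct, single_one_dotProduct]
  simp [dotProduct, Set.indicator_apply]

theorem negEdgeBiadj_mulVec_apply [Fintype Y] (u : X) (v : Y) (N : Finset X) (M : Finset Y)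
    (y : Y → ℝ) (a : X) :
    (negEdgeBiadj u v N M *ᵥ y) a = (∑ b, y b - y v) * (1 - Pi.single u 1 : X → ℝ) a
      - (∑ b ∈ M, y b - y v) * signedNbr u N a := by
  rw [negEdgeBiadj, vecMulVec_sub_vecMulVec_mulVec, one_sub_single_dotProduct,
    signedNbr_dotProduct]
  rfl

theorem dotProduct_negEdgeBiadj_mulVec [Fintype X] [Fintype Y] (u : X) (v : Y) (N : Finset X)
    (M : Finset Y) (x : X → ℝ) (y : Y → ℝ) :
    x ⬝ᵥ negEdgeBiadj u v N M *ᵥ y = (∑ a, x a - x u) * (∑ b, y b - y v)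
      - (∑ a ∈ N, x a - x u) * (∑ b ∈ M, y b - y v) := by
  rw [negEdgeBiadj, vecMulVec_sub_vecMulVec_mulVec, dotProduct_sub, dotProduct_smul,
    dotProduct_smul, dotProduct_comm x, dotProduct_comm x, one_sub_single_dotProduct,
    one_sub_single_dotProduct, signedNbr_dotProduct, signedNbr_dotProduct, smul_eq_mul,
    smul_eq_mul]
  ring

theorem det_rankTwoMatrix_signedNbr_singleton [Fintype X] [Fintype Y] {u u₀ : X} {v v₀ : Y}
    (hu : u₀ ≠ u) (hv : v₀ ≠ v) (θ : ℝ) :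
    (rankTwoMatrix (1 - Pi.single u 1) (signedNbr u {u₀}) (1 - Pi.single v 1) (signedNbr v {v₀})
      θ).det = gammaPoly (Fintype.card X) (Fintype.card Y) θ := by
  rw [rankTwoMatrix, det_fin_two_of]
  simp only [one_sub_single_dotProduct, signedNbr_dotProduct, signedNbr_apply, gammaPoly]
  simp [hu.symm, hv.symm]
  ring

theorem exists_isSingularPair_negEdgeBiadj_singleton_iff [Fintype X] [Fintype Y] {u u₀ : X}
    {v v₀ : Y} (hu : u₀ ≠ u) (hv : v₀ ≠ v) {θ : ℝ} (hθ : θ ≠ 0) :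
    (∃ x y, IsSingularPair (negEdgeBiadj u v {u₀} {v₀}) θ x y) ↔
      gammaPoly (Fintype.card X) (Fintype.card Y) θ = 0 := by
  rw [negEdgeBiadj, exists_isSingularPair_rankTwo_iff hθ,
    det_rankTwoMatrix_signedNbr_singleton hu hv]

end NegEdgeBiadj

section Monotone

variable {X Y : Type*}

theorem eq_singleton_of_sum_eq {N : Finset Y} {y : Y → ℝ} (hy : ∀ b ∈ N, 0 < y b) {b : Y}
    (hb : b ∈ N) (h : ∑ i ∈ N, y i = y b) : N = {b} := by
  classical
  refine eq_singleton_iff_unique_mem.mpr ⟨hb, fun i hi ↦ ?_⟩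
  by_contra hib
  have := add_le_sum (fun j hj ↦ (hy j hj).le) hi hb hib
  linarith [hy i hi]

variable [Fintype Y]

theorem eq_of_dotProduct_eq_of_le {y f g : Y → ℝ} (hy : 0 ≤ y) (hfg : f ≤ g)
    (h : f ⬝ᵥ y = g ⬝ᵥ y) {b : Y} (hb : 0 < y b) : f b = g b := by
  have hterm := (sum_eq_sum_iff_of_le fun i _ ↦ mul_le_mul_of_nonneg_right (hfg i) (hy i)).mp h
  exact mul_right_cancel₀ hb.ne' (hterm b (mem_univ b))

variable {B T : Matrix X Y ℝ} {x : X → ℝ} {y : Y → ℝ}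

theorem mulVec_le_mulVec_of_le (hBT : ∀ a b, B a b ≤ T a b) (hy : 0 ≤ y) : B *ᵥ y ≤ T *ᵥ y :=
  fun a ↦ dotProduct_le_dotProduct_of_nonneg_right (hBT a) hy

variable [Fintype X] {ρ : ℝ}

theorem IsSingularPair.apply_eq_of_le (hB : IsSingularPair B ρ x y) (hT : IsSingularPair T ρ x y)
    (hBT : ∀ a b, B a b ≤ T a b) (hy : 0 ≤ y) (a : X) {b : Y} (hb : 0 < y b) :
    B a b = T a b :=
  eq_of_dotProduct_eq_of_le hy (hBT a) ((hB.mulVec_apply a).trans (hT.mulVec_apply a).symm) hb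

end Monotone

section NegEdgeBiadj

variable {X Y : Type*} [Fintype X] [Fintype Y] [DecidableEq X] [DecidableEq Y]
  {u u₀ : X} {v v₀ : Y} {N : Finset X} {M : Finset Y} {x : X → ℝ} {y : Y → ℝ} {ρ : ℝ}

namespace IsSingularPair

theorem mul_apply_left (h : IsSingularPair (negEdgeBiadj u v N M) ρ x y) (hu : u ∉ N) :
    ρ * x u = ∑ b ∈ M, y b - y v := by
  simp [← h.mulVec_apply, negEdgeBiadj_mulVec_apply, signedNbr_apply, hu]

theorem mul_apply_nbr (h : IsSingularPair (negEdgeBiadj u v N M) ρ x y) (hu : u ∉ N)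
    (hu₀ : u₀ ∈ N) : ρ * x u₀ = ∑ b, y b - y v - ρ * x u := by
  have hne : u₀ ≠ u := fun h ↦ hu (h ▸ hu₀)
  simp [h.mul_apply_left hu, ← h.mulVec_apply u₀, negEdgeBiadj_mulVec_apply, signedNbr_apply,
    hne, hu₀]

theorem mul_apply_of_notMem (h : IsSingularPair (negEdgeBiadj u v N M) ρ x y) {a : X}
    (ha : a ≠ u) (haN : a ∉ N) : ρ * x a = ∑ b, y b - y v := by
  simp [← h.mulVec_apply, negEdgeBiadj_mulVec_apply, signedNbr_apply, ha, haN]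

theorem symm_negEdgeBiadj (h : IsSingularPair (negEdgeBiadj u v N M) ρ x y) :
    IsSingularPair (negEdgeBiadj v u M N) ρ y x :=
  transpose_negEdgeBiadj u v N M ▸ h.symm

theorem sum_sub_pos (h : IsSingularPair (negEdgeBiadj u v {u₀} {v₀}) ρ x y) (hρ : 0 < ρ)
    (hx : ∀ a, 0 ≤ x a) (hy : ∀ b, 0 ≤ y b) (hu₀ : u₀ ≠ u) (hv₀ : v₀ ≠ v) : 0 < ∑ b, y b - y v := by
  rw [← sum_erase_eq_sub (mem_univ v)]
  refine (sum_nonneg fun b _ ↦ hy b).lt_of_ne' fun h0 ↦ h.ne_zero ?_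
  have hy_ne : ∀ b ≠ v, y b = 0 := fun b hb ↦
    (sum_eq_zero_iff_of_nonneg fun b _ ↦ hy b).mp h0 b (mem_erase_of_ne_of_mem hb (mem_univ b))
  rw [sum_erase_eq_sub (mem_univ v)] at h0
  have hxu_eq := h.mul_apply_left (notMem_singleton.mpr hu₀.symm)
  rw [sum_singleton, hy_ne v₀ hv₀] at hxu_eq
  have hyv : y v = 0 := by linarith [mul_nonneg hρ.le (hx u), hy v]
  have hxu : x u = 0 := by simpa [hyv, hρ.ne'] using hxu_eq
  have hx_eq (a : X) : x a = 0 := by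
    refine (mul_eq_zero_iff_left hρ.ne').mp ?_
    by_cases hau : a = u
    · rw [hau, hxu, mul_zero]
    by_cases hau₀ : a = u₀
    · rw [h.mul_apply_nbr (notMem_singleton.mpr hu₀.symm) (mem_singleton.mpr hau₀), h0, hxu]
      ring
    · rw [h.mul_apply_of_notMem hau (notMem_singleton.mpr hau₀), h0]
  ext (a | b)
  · exact hx_eq a
  · exact if hb : b = v then hb ▸ hyv else hy_ne b hb

theorem apply_pos (h : IsSingularPair (negEdgeBiadj u v {u₀} {v₀}) ρ x y) (hρ : 0 < ρ)
    (hx : ∀ a, 0 ≤ x a) (hy : ∀ b, 0 ≤ y b) (hu₀ : u₀ ≠ u) (hv₀ : v₀ ≠ v) {a : X} (ha : a ≠ u) :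
    0 < x a := by
  have hsum := h.sum_sub_pos hρ hx hy hu₀ hv₀
  obtain rfl | hau₀ := eq_or_ne a u₀
  · obtain hxu | hxu := (hx u).eq_or_lt
    · have := h.mul_apply_nbr (notMem_singleton.mpr ha.symm) (mem_singleton_self a)
      rw [← hxu] at this
      exact pos_of_mul_pos_right (by linarith) hρ.le
    · have := h.symm_negEdgeBiadj.mul_apply_left (notMem_singleton.mpr hv₀.symm)
      rw [sum_singleton] at this
      linarith [mul_nonneg hρ.le (hy v)]
  · rw [← h.mul_apply_of_notMem ha (notMem_singleton.mpr hau₀)] at hsum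
    exact pos_of_mul_pos_right hsum hρ.le

theorem apply_left_pos_or_apply_right_pos
    (h : IsSingularPair (negEdgeBiadj u v {u₀} {v₀}) ρ x y) (hρ : 0 < ρ)
    (hx : ∀ a, 0 ≤ x a) (hy : ∀ b, 0 ≤ y b) (hu₀ : u₀ ≠ u) (hv₀ : v₀ ≠ v) : 0 < x u ∨ 0 < y v := by
  by_contra! hle
  have hxu₀ := h.symm_negEdgeBiadj.mul_apply_left (notMem_singleton.mpr hv₀.symm)
  rw [sum_singleton] at hxu₀
  linarith [h.apply_pos hρ hx hy hu₀ hv₀ hu₀, hx u, mul_nonpos_of_nonneg_of_nonpos hρ.le hle.2]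

end IsSingularPair

theorem mul_le_mul_of_row_bounds {p q s t xu yv : ℝ} (hρ : 1 ≤ ρ) (hp : 0 ≤ p) (hs : 0 ≤ s)
    (hxu : 0 ≤ xu) (hyv : 0 ≤ yv) (hq : -xu ≤ q) (ht : -yv ≤ t) (hps : ρ * yv ≤ p + q)
    (hst : ρ * xu ≤ s + t) : q * t ≤ (p + q) * (s + t) := by
  -- The gain is `p (s + t) + s q = s (p + q) + p t`.
  obtain hle | hle := le_or_gt s (ρ * p)
  · nlinarith [mul_nonneg hp (sub_nonneg.mpr hst), mul_nonneg (sub_nonneg.mpr hle) hxu,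
      mul_le_mul_of_nonneg_left hq hs]
  · have hle' : p ≤ ρ * s := by nlinarith
    nlinarith [mul_nonneg hs (sub_nonneg.mpr hps), mul_nonneg (sub_nonneg.mpr hle') hyv,
      mul_le_mul_of_nonneg_left ht hp]

theorem dotProduct_negEdgeBiadj_mulVec_le_singleton (hρ : 1 ≤ ρ) (hx : ∀ a, 0 ≤ x a)
    (hy : ∀ b, 0 ≤ y b) (hu₀ : u₀ ∈ N) (hv₀ : v₀ ∈ M) (hM : ρ * x u ≤ ∑ b ∈ M, y b - y v)
    (hN : ρ * y v ≤ ∑ a ∈ N, x a - x u) :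
    x ⬝ᵥ negEdgeBiadj u v N M *ᵥ y ≤ x ⬝ᵥ negEdgeBiadj u v {u₀} {v₀} *ᵥ y := by
  have hp : 0 ≤ ∑ a ∈ N, x a - x u₀ := sub_nonneg.mpr (single_le_sum (fun a _ ↦ hx a) hu₀)
  have hs : 0 ≤ ∑ b ∈ M, y b - y v₀ := sub_nonneg.mpr (single_le_sum (fun b _ ↦ hy b) hv₀)
  rw [dotProduct_negEdgeBiadj_mulVec, dotProduct_negEdgeBiadj_mulVec, sum_singleton,
    sum_singleton]
  refine sub_le_sub_left ?_ _
  have := mul_le_mul_of_row_bounds (q := x u₀ - x u) (t := y v₀ - y v) hρ hp hs (hx u) (hy v)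
    (by linarith [hx u₀]) (by linarith [hy v₀]) (by linarith) (by linarith)
  linarith

/-- If the row bound at `u` is attained at a nonzero entry, then no positive neighbour was lost in
passing to the singletons. -/
theorem IsSingularPair.eq_singleton_of_mul_eq
    (h : IsSingularPair (negEdgeBiadj u v {u₀} {v₀}) ρ x y) (hρ : 0 < ρ) (hx : ∀ a, 0 ≤ x a)
    (hy : ∀ b, 0 ≤ y b) (hu : u ∉ N) (hv : v ∉ M) (hu₀ : u₀ ∈ N) (hv₀ : v₀ ∈ M)
    (hgain : (∑ a ∈ N, x a - x u) * (∑ b ∈ M, y b - y v) = (x u₀ - x u) * (y v₀ - y v))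
    (hxu : 0 < x u) (hM : ρ * x u = ∑ b ∈ M, y b - y v) : N = {u₀} ∧ M = {v₀} := by
  have hne : u₀ ≠ u := ne_of_mem_of_not_mem hu₀ hu
  have hne' : v₀ ≠ v := ne_of_mem_of_not_mem hv₀ hv
  have hyv₀ := h.mul_apply_left (notMem_singleton.mpr hne.symm)
  rw [sum_singleton] at hyv₀
  constructor
  · refine eq_singleton_of_sum_eq (y := x) (fun a ha ↦ ?_) hu₀ ?_
    · exact h.apply_pos hρ hx hy hne hne' (ne_of_mem_of_not_mem ha hu)
    · rw [← hM, ← hyv₀] at hgain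
      linarith [mul_right_cancel₀ (mul_pos hρ hxu).ne' hgain]
  · refine eq_singleton_of_sum_eq (fun b hb ↦ ?_) hv₀ (by linarith)
    exact h.symm_negEdgeBiadj.apply_pos hρ hy hx hne' hne (ne_of_mem_of_not_mem hb hv)

end NegEdgeBiadj

section QuadBalanced

variable {X Y : Type*}

/-- `B` is the biadjacency matrix of a signed bipartite graph without negative `4`-cycles. -/
structure IsQuadBalanced (B : Matrix X Y ℝ) : Prop where
  entry (a : X) (b : Y) : B a b = 0 ∨ B a b = 1 ∨ B a b = -1
  quad {a a' : X} {b b' : Y} (ha : a ≠ a') (hb : b ≠ b') :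
    B a b * B a' b * B a' b' * B a b' ≠ -1

namespace IsQuadBalanced

variable {B : Matrix X Y ℝ} {u u₀ : X} {v v₀ : Y}

theorem transpose (hB : IsQuadBalanced B) : IsQuadBalanced Bᵀ where
  entry b a := hB.entry a b
  quad {b b' a a'} hb ha h := hB.quad ha hb (by simpa only [transpose_apply, mul_assoc,
    mul_comm, mul_left_comm] using h)

theorem le_one (hB : IsQuadBalanced B) (a : X) (b : Y) : B a b ≤ 1 := by
  rcases hB.entry a b with h | h | h <;> norm_num [h]

theorem eq_one_of_pos (hB : IsQuadBalanced B) {a : X} {b : Y} (h : 0 < B a b) : B a b = 1 := by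
  rcases hB.entry a b with h' | h' | h' <;> linarith

theorem nonpos_of_ne_one (hB : IsQuadBalanced B) {a : X} {b : Y} (h : B a b ≠ 1) : B a b ≤ 0 :=
  not_lt.mp fun h' ↦ h (hB.eq_one_of_pos h')

theorem le_signedNbr [Fintype Y] [DecidableEq Y] (hB : IsQuadBalanced B) (huv : B u v = -1)
    (b : Y) :
    B u b ≤ signedNbr v {b | B u b = 1} b := by
  rw [signedNbr_apply]
  obtain rfl | hb := eq_or_ne b v
  · norm_num [huv]
  by_cases h : B u b = 1
  · simp [h, hb]
  · simpa [h, hb] using hB.nonpos_of_ne_one h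

theorem mul_apply_left_le [Fintype X] [Fintype Y] (hB : IsQuadBalanced B) {ρ : ℝ} {x : X → ℝ}
    {y : Y → ℝ} (h : IsSingularPair B ρ x y) (hy : ∀ b, 0 ≤ y b) (huv : B u v = -1) :
    ρ * x u ≤ ∑ b with B u b = 1, y b - y v := by
  classical
  rw [← h.mulVec_apply, ← signedNbr_dotProduct]
  exact dotProduct_le_dotProduct_of_nonneg_right (hB.le_signedNbr huv) hy

variable [Fintype X] [Fintype Y] [DecidableEq X] [DecidableEq Y]

theorem le_negEdgeBiadj (hB : IsQuadBalanced B) (huv : B u v = -1) (a : X) (b : Y) :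
    B a b ≤ negEdgeBiadj u v {a | B a v = 1} {b | B u b = 1} a b := by
  obtain rfl | ha := eq_or_ne a u
  · rw [negEdgeBiadj_apply_left (by norm_num [huv])]
    exact hB.le_signedNbr huv b
  obtain rfl | hb := eq_or_ne b v
  · rw [negEdgeBiadj_apply_right (by norm_num [huv])]
    exact hB.transpose.le_signedNbr huv a
  rw [negEdgeBiadj_apply_of_ne ha hb]
  split_ifs with h
  · refine hB.nonpos_of_ne_one fun hab ↦ hB.quad ha hb ?_
    simp only [mem_filter_univ] at h
    rw [hab, h.1, h.2, huv]
    norm_num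
  · exact hB.le_one a b

variable {x : X → ℝ} {y : Y → ℝ} {ρ R : ℝ}

theorem dotProduct_mulVec_le (hB : IsQuadBalanced B) (hx : ∀ a, 0 ≤ x a) (hy : ∀ b, 0 ≤ y b)
    (huv : B u v = -1) :
    x ⬝ᵥ B *ᵥ y ≤ x ⬝ᵥ negEdgeBiadj u v {a | B a v = 1} {b | B u b = 1} *ᵥ y :=
  dotProduct_le_dotProduct_of_nonneg_left (mulVec_le_mulVec_of_le (hB.le_negEdgeBiadj huv) hy) hx

theorem dotProduct_negEdgeBiadj_mulVec_le (hB : IsQuadBalanced B) (h : IsSingularPair B ρ x y)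
    (hρ : 1 ≤ ρ) (hx : ∀ a, 0 ≤ x a) (hy : ∀ b, 0 ≤ y b) (huv : B u v = -1) (hu₀ : B u₀ v = 1)
    (hv₀ : B u v₀ = 1) :
    x ⬝ᵥ negEdgeBiadj u v {a | B a v = 1} {b | B u b = 1} *ᵥ y ≤
      x ⬝ᵥ negEdgeBiadj u v {u₀} {v₀} *ᵥ y :=
  dotProduct_negEdgeBiadj_mulVec_le_singleton hρ hx hy ((mem_filter_univ u₀).mpr hu₀)
    ((mem_filter_univ v₀).mpr hv₀) (hB.mul_apply_left_le h hy huv)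
    (hB.transpose.mul_apply_left_le h.symm hx huv)

theorem le_of_forall_isSingularPair_le (hB : IsQuadBalanced B) (h : IsSingularPair B ρ x y)
    (hρ : 1 ≤ ρ) (hx : ∀ a, 0 ≤ x a) (hy : ∀ b, 0 ≤ y b) (huv : B u v = -1) (hu₀ : B u₀ v = 1)
    (hv₀ : B u v₀ = 1)
    (hR : ∀ θ x y, IsSingularPair (negEdgeBiadj u v {u₀} {v₀}) θ x y → θ ≤ R) : ρ ≤ R := by
  refine le_of_mul_le_mul_right ?_ h.dotProduct_add_dotProduct_pos
  calc ρ * (x ⬝ᵥ x + y ⬝ᵥ y) = 2 * (x ⬝ᵥ B *ᵥ y) := h.two_mul_dotProduct_mulVec.symm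
    _ ≤ 2 * (x ⬝ᵥ negEdgeBiadj u v {u₀} {v₀} *ᵥ y) := by
      linarith [hB.dotProduct_mulVec_le hx hy huv,
        hB.dotProduct_negEdgeBiadj_mulVec_le h hρ hx hy huv hu₀ hv₀]
    _ ≤ R * (x ⬝ᵥ x + y ⬝ᵥ y) := two_mul_dotProduct_mulVec_le hR x y

theorem isSingularPair_negEdgeBiadj (hB : IsQuadBalanced B) (h : IsSingularPair B ρ x y)
    (hρ : 1 ≤ ρ) (hx : ∀ a, 0 ≤ x a) (hy : ∀ b, 0 ≤ y b) (huv : B u v = -1) (hu₀ : B u₀ v = 1)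
    (hv₀ : B u v₀ = 1)
    (hR : ∀ θ x y, IsSingularPair (negEdgeBiadj u v {u₀} {v₀}) θ x y → θ ≤ ρ) :
    IsSingularPair (negEdgeBiadj u v {u₀} {v₀}) ρ x y := by
  refine isSingularPair_of_two_mul_dotProduct_mulVec_eq hR h.ne_zero ?_
  linarith [two_mul_dotProduct_mulVec_le hR x y, h.two_mul_dotProduct_mulVec,
    hB.dotProduct_mulVec_le hx hy huv,
    hB.dotProduct_negEdgeBiadj_mulVec_le h hρ hx hy huv hu₀ hv₀]

theorem mul_apply_left_eq (hB : IsQuadBalanced B) (h : IsSingularPair B ρ x y)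
    (hx : ∀ a, 0 ≤ x a) (hy : ∀ b, 0 ≤ y b) (huv : B u v = -1)
    (heq : x ⬝ᵥ B *ᵥ y = x ⬝ᵥ negEdgeBiadj u v {a | B a v = 1} {b | B u b = 1} *ᵥ y)
    (hxu : 0 < x u) : ρ * x u = ∑ b with B u b = 1, y b - y v := by
  rw [dotProduct_comm, dotProduct_comm x] at heq
  rw [← h.mulVec_apply, eq_of_dotProduct_eq_of_le hx
    (mulVec_le_mulVec_of_le (hB.le_negEdgeBiadj huv) hy) heq hxu]
  simp [negEdgeBiadj_mulVec_apply, signedNbr_apply u, huv, neg_eq_self]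

theorem posNbr_eq_singleton (hB : IsQuadBalanced B) (h : IsSingularPair B ρ x y)
    (hρ : 1 ≤ ρ) (hx : ∀ a, 0 ≤ x a) (hy : ∀ b, 0 ≤ y b) (huv : B u v = -1) (hu₀ : B u₀ v = 1)
    (hv₀ : B u v₀ = 1)
    (hΓ : IsSingularPair (negEdgeBiadj u v {u₀} {v₀}) ρ x y) :
    ({a | B a v = 1} : Finset X) = {u₀} ∧ ({b | B u b = 1} : Finset Y) = {v₀} := by
  have hu : u ∉ ({a | B a v = 1} : Finset X) := by norm_num [huv]
  have hv : v ∉ ({b | B u b = 1} : Finset Y) := by norm_num [huv]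
  have hu₀N : u₀ ∈ ({a | B a v = 1} : Finset X) := (mem_filter_univ u₀).mpr hu₀
  have hv₀M : v₀ ∈ ({b | B u b = 1} : Finset Y) := (mem_filter_univ v₀).mpr hv₀
  have hρ0 : 0 < ρ := by linarith
  have hle := hB.dotProduct_mulVec_le hx hy huv
  have hle' := hB.dotProduct_negEdgeBiadj_mulVec_le h hρ hx hy huv hu₀ hv₀
  have heq : x ⬝ᵥ B *ᵥ y = x ⬝ᵥ negEdgeBiadj u v {u₀} {v₀} *ᵥ y := by
    linarith [h.two_mul_dotProduct_mulVec, hΓ.two_mul_dotProduct_mulVec]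
  have heqB := hle.antisymm (hle'.trans heq.ge)
  have hgain := hle'.antisymm (heq.ge.trans hle)
  rw [dotProduct_negEdgeBiadj_mulVec, dotProduct_negEdgeBiadj_mulVec, sum_singleton,
    sum_singleton, sub_right_inj] at hgain
  obtain hxu | hyv := hΓ.apply_left_pos_or_apply_right_pos hρ0 hx hy
    (ne_of_mem_of_not_mem hu₀N hu) (ne_of_mem_of_not_mem hv₀M hv)
  · exact hΓ.eq_singleton_of_mul_eq hρ0 hx hy hu hv hu₀N hv₀M hgain hxu
      (hB.mul_apply_left_eq h hx hy huv heqB hxu)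
  · rw [← dotProduct_transpose_mulVec B, ← dotProduct_transpose_mulVec (negEdgeBiadj _ _ _ _),
      transpose_negEdgeBiadj] at heqB
    rw [mul_comm, mul_comm (x u₀ - x u)] at hgain
    exact (hΓ.symm_negEdgeBiadj.eq_singleton_of_mul_eq hρ0 hy hx hv hu hv₀M hu₀N hgain hyv
      (hB.transpose.mul_apply_left_eq h.symm hy hx huv heqB hyv)).symm

theorem eq_negEdgeBiadj_singleton (hB : IsQuadBalanced B) (h : IsSingularPair B ρ x y)
    (hρ : 1 ≤ ρ) (hx : ∀ a, 0 ≤ x a) (hy : ∀ b, 0 ≤ y b) (huv : B u v = -1) (hu₀ : B u₀ v = 1)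
    (hv₀ : B u v₀ = 1)
    (hR : ∀ θ x y, IsSingularPair (negEdgeBiadj u v {u₀} {v₀}) θ x y → θ ≤ ρ) :
    B = negEdgeBiadj u v {u₀} {v₀} := by
  have hΓ := hB.isSingularPair_negEdgeBiadj h hρ hx hy huv hu₀ hv₀ hR
  have hle := hB.le_negEdgeBiadj huv
  obtain ⟨hN, hM⟩ := hB.posNbr_eq_singleton h hρ hx hy huv hu₀ hv₀ hΓ
  rw [hN, hM] at hle
  have hρ0 : 0 < ρ := by linarith
  have hne : u₀ ≠ u := by rintro rfl; norm_num [huv] at hu₀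
  have hne' : v₀ ≠ v := by rintro rfl; norm_num [huv] at hv₀
  ext a b
  by_cases hb : b = v
  · by_cases ha : a = u
    · rw [ha, hb, huv, negEdgeBiadj_apply_left (notMem_singleton.mpr hne.symm), signedNbr_apply,
        if_neg (notMem_singleton.mpr hne'.symm), if_pos rfl, zero_sub]
    · exact h.symm.apply_eq_of_le hΓ.symm (fun b a ↦ hle a b) hx b
        (hΓ.apply_pos hρ0 hx hy hne hne' ha)
  · exact h.apply_eq_of_le hΓ hle hy a
      (hΓ.symm_negEdgeBiadj.apply_pos hρ0 hy hx hne' hne hb)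

end IsQuadBalanced
end QuadBalanced

section TuranBound

/-- The extremal spectral radius, that is, the spectral radius of `Γ_{⌊n/2⌋,⌈n/2⌉}`. -/
noncomputable def turanBound (n : ℕ) : ℝ :=
  if Even n then ((n : ℝ) - 6 + Real.sqrt (((n : ℝ) - 2) * ((n : ℝ) + 6))) / 4
  else Real.sqrt ((((n : ℝ) ^ 2 - 4 * (n : ℝ) + 11) +
    Real.sqrt (((n : ℝ) ^ 2 - 4 * (n : ℝ) + 11) ^ 2 - 64 * ((n : ℝ) - 2) * ((n : ℝ) - 4))) / 8)

theorem turanBound_add_self (k : ℕ) :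
    turanBound (k + k) = ((k : ℝ) - 3 + √((k - 1) * (k + 3))) / 2 := by
  have hsqrt : √(((k + k : ℕ) - 2 : ℝ) * ((k + k : ℕ) + 6)) = 2 * √((k - 1) * (k + 3)) := by
    rw [show ((k + k : ℕ) - 2 : ℝ) * ((k + k : ℕ) + 6) = 2 ^ 2 * ((k - 1) * (k + 3)) by
      push_cast; ring, Real.sqrt_mul (by positivity), Real.sqrt_sq (by norm_num)]
  rw [turanBound, if_pos ⟨k, rfl⟩, hsqrt]
  push_cast
  ring

theorem turanBound_two_mul_add_one (k : ℕ) :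
    turanBound (2 * k + 1) = √((((k : ℝ) - 1) * k + 2 +
      √(((k - 1) * k + 2) ^ 2 - 4 * ((2 * k - 3) * (2 * k - 1)))) / 2) := by
  have hsqrt : √((((2 * k + 1 : ℕ) : ℝ) ^ 2 - 4 * (2 * k + 1 : ℕ) + 11) ^ 2
      - 64 * ((2 * k + 1 : ℕ) - 2) * ((2 * k + 1 : ℕ) - 4))
      = 4 * √((((k : ℝ) - 1) * k + 2) ^ 2 - 4 * ((2 * k - 3) * (2 * k - 1))) := by
    rw [show (((2 * k + 1 : ℕ) : ℝ) ^ 2 - 4 * (2 * k + 1 : ℕ) + 11) ^ 2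
      - 64 * ((2 * k + 1 : ℕ) - 2) * ((2 * k + 1 : ℕ) - 4)
      = 4 ^ 2 * ((((k : ℝ) - 1) * k + 2) ^ 2 - 4 * ((2 * k - 3) * (2 * k - 1))) by
      push_cast; ring, Real.sqrt_mul (by positivity), Real.sqrt_sq (by norm_num)]
  rw [turanBound, if_neg (Nat.not_even_two_mul_add_one k), hsqrt]
  congr 1
  push_cast
  ring

variable {n : ℕ} {θ : ℝ}

theorem turanBound_nonneg (hn : 6 ≤ n) : 0 ≤ turanBound n := by
  have : (6 : ℝ) ≤ n := by exact_mod_cast hn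
  rw [turanBound]
  split_ifs
  · exact div_nonneg (add_nonneg (by linarith) (Real.sqrt_nonneg _)) zero_le_four
  · exact Real.sqrt_nonneg _

theorem exists_two_mul_turanBound_sq_eq (hn : 6 ≤ n) {r s : ℝ} (hr : r = (n / 2 : ℕ))
    (hs : s = (n - n / 2 : ℕ)) : ∃ w ≥ 0, 2 * turanBound n ^ 2 = (r - 1) * (s - 1) + 2 + w ∧
      w ^ 2 = ((r - 1) * (s - 1) + 2) ^ 2 - 4 * ((2 * r - 3) * (2 * s - 3)) := by
  obtain ⟨k, rfl⟩ | ⟨k, rfl⟩ := n.even_or_odd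
  · have hrk : r = k := by rw [hr]; congr 1; lia
    have hsk : s = k := by rw [hs]; congr 1; lia
    have hk : (3 : ℝ) ≤ k := by exact_mod_cast (by lia : 3 ≤ k)
    have hsq : √(((k : ℝ) - 1) * (k + 3)) ^ 2 = (k - 1) * (k + 3) :=
      Real.sq_sqrt (mul_nonneg (by linarith) (by linarith))
    rw [hrk, hsk, turanBound_add_self]
    refine ⟨((k : ℝ) - 3) * √((k - 1) * (k + 3)),
      mul_nonneg (by linarith) (Real.sqrt_nonneg _), ?_, ?_⟩
    · linear_combination hsq / 2
    · linear_combination ((k : ℝ) - 3) ^ 2 * hsq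
  · have hrk : r = k := by rw [hr]; congr 1; lia
    have hsk : s = k + 1 := by rw [hs]; norm_cast; lia
    obtain ⟨t, rfl⟩ := Nat.exists_eq_add_of_le (by lia : 3 ≤ k)
    have hdisc : (((3 + t : ℕ) - 1 : ℝ) * (3 + t : ℕ) + 2) ^ 2
        - 4 * ((2 * (3 + t : ℕ) - 3) * (2 * (3 + t : ℕ) - 1))
        = t ^ 4 + 10 * t ^ 3 + 25 * t ^ 2 + 16 * t + 4 := by
      push_cast; ring
    rw [hrk, hsk, turanBound_two_mul_add_one, hdisc]
    refine ⟨√((t : ℝ) ^ 4 + 10 * t ^ 3 + 25 * t ^ 2 + 16 * t + 4), Real.sqrt_nonneg _, ?_, ?_⟩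
    · rw [Real.sq_sqrt]
      · push_cast; ring
      · push_cast
        exact div_nonneg (add_nonneg (by nlinarith) (Real.sqrt_nonneg _)) zero_le_two
    · rw [Real.sq_sqrt (by positivity)]
      linear_combination -hdisc

theorem gammaPoly_turanBound (hn : 6 ≤ n) :
    gammaPoly (n / 2 : ℕ) (n - n / 2 : ℕ) (turanBound n) = 0 := by
  obtain ⟨w, -, hR, hw⟩ := exists_two_mul_turanBound_sq_eq hn rfl rfl
  rw [gammaPoly]
  linear_combination (2 * turanBound n ^ 2 + w - (((n / 2 : ℕ) - 1) * ((n - n / 2 : ℕ) - 1) + 2))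
    / 4 * hR + hw / 4

theorem one_le_turanBound (hn : 6 ≤ n) : 1 ≤ turanBound n := by
  obtain ⟨w, hw, hR, -⟩ := exists_two_mul_turanBound_sq_eq hn rfl rfl
  have hr : (1 : ℝ) ≤ (n / 2 : ℕ) := by exact_mod_cast (by lia : 1 ≤ n / 2)
  have hs : (1 : ℝ) ≤ (n - n / 2 : ℕ) := by exact_mod_cast (by lia : 1 ≤ n - n / 2)
  refine (one_le_sq_iff₀ (turanBound_nonneg hn)).mp ?_
  linarith [mul_nonneg (sub_nonneg.mpr hr) (sub_nonneg.mpr hs)]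

theorem le_turanBound_of_gammaPoly_nonpos (hn : 6 ≤ n)
    (hθ : gammaPoly (n / 2 : ℕ) (n - n / 2 : ℕ) θ ≤ 0) : θ ≤ turanBound n := by
  obtain ⟨w, hw0, hR, hw⟩ := exists_two_mul_turanBound_sq_eq hn rfl rfl
  rw [gammaPoly] at hθ
  have hle : 2 * θ ^ 2 - ((((n / 2 : ℕ) : ℝ) - 1) * ((n - n / 2 : ℕ) - 1) + 2) ≤ w :=
    le_of_sq_le_sq (by linarith) hw0
  exact le_of_sq_le_sq (by linarith) (turanBound_nonneg hn)

theorem lt_turanBound_of_gammaPoly_neg (hn : 6 ≤ n)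
    (hθ : gammaPoly (n / 2 : ℕ) (n - n / 2 : ℕ) θ < 0) : θ < turanBound n := by
  refine (le_turanBound_of_gammaPoly_nonpos hn hθ.le).lt_of_ne fun h ↦ hθ.ne ?_
  rw [h, gammaPoly_turanBound hn]

theorem gammaPoly_comm (r s θ : ℝ) : gammaPoly r s θ = gammaPoly s r θ := by
  simp only [gammaPoly]
  ring

theorem gammaPoly_eq_add (r s r' s' θ : ℝ) (h : r + s = r' + s') :
    gammaPoly r s θ = gammaPoly r' s' θ + (r' * s' - r * s) * (θ ^ 2 - 4) := by
  obtain rfl : s = r' + s' - r := by linarith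
  simp only [gammaPoly]
  ring

theorem two_lt_turanBound (hn : 7 ≤ n) : 2 < turanBound n := by
  refine lt_turanBound_of_gammaPoly_neg (by lia) ?_
  have hn' : (7 : ℝ) ≤ (n / 2 : ℕ) + (n - n / 2 : ℕ) := by exact_mod_cast (by lia)
  rw [gammaPoly]
  linarith

theorem mul_lt_div_two_mul {r s : ℕ} (hr : r ≠ (r + s) / 2) (hs : s ≠ (r + s) / 2) :
    r * s < (r + s) / 2 * (r + s - (r + s) / 2) := by
  set k := (r + s) / 2 with hk
  obtain ⟨l, hl⟩ := Nat.exists_eq_add_of_le (by lia : k ≤ r + s)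
  rw [hl, Nat.add_sub_cancel_left]
  zify at *
  have hfactor : (k * l - r * s : ℤ) = (k - r) * (l - r) := by linear_combination (-r : ℤ) * hl
  have hpos : (0 : ℤ) < (k - r) * (l - r) := by
    obtain hlt | hgt := hr.lt_or_gt
    · exact mul_pos (by lia) (by lia)
    · exact mul_pos_of_neg_of_neg (by lia) (by lia)
  linarith

theorem lt_turanBound_of_gammaPoly_eq_zero {r s : ℕ} (hr : 3 ≤ r) (hs : 3 ≤ s)
    (hθ : gammaPoly r s θ = 0) (hr' : r ≠ (r + s) / 2) (hs' : s ≠ (r + s) / 2) :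
    θ < turanBound (r + s) := by
  obtain hle | hlt := le_or_gt θ 2
  · exact hle.trans_lt (two_lt_turanBound (by lia))
  refine lt_turanBound_of_gammaPoly_neg (by lia) ?_
  rw [gammaPoly_eq_add _ _ r s _ (by norm_cast; lia), hθ, zero_add]
  refine mul_neg_of_neg_of_pos (sub_neg.mpr ?_) (by nlinarith only [hlt])
  exact_mod_cast mul_lt_div_two_mul hr' hs'

theorem le_turanBound_of_gammaPoly_eq_zero {r s : ℕ} (hr : 3 ≤ r) (hs : 3 ≤ s)
    (hθ : gammaPoly r s θ = 0) : θ ≤ turanBound (r + s) := by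
  by_cases hr' : r = (r + s) / 2
  · refine le_turanBound_of_gammaPoly_nonpos (by lia) ?_
    rw [← hr', Nat.add_sub_cancel_left, hθ]
  by_cases hs' : s = (r + s) / 2
  · refine le_turanBound_of_gammaPoly_nonpos (by lia) ?_
    rw [← hs', Nat.add_sub_cancel, gammaPoly_comm, hθ]
  · exact (lt_turanBound_of_gammaPoly_eq_zero hr hs hθ hr' hs').le

end TuranBound

theorem two_mul_countP_support_tail_add {V : Type*} {G : SimpleGraph V} {p : V → Prop}
    [DecidablePred p] (hp : ∀ u v, G.Adj u v → (p u ↔ ¬p v)) {u v : V} (w : G.Walk u v) :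
    2 * w.support.tail.countP p + (if p u then 1 else 0) = w.length + if p v then 1 else 0 := by
  induction w with
  | nil => simp
  | @cons u v t h w ih =>
    rw [SimpleGraph.Walk.support_cons, List.tail_cons, ← w.cons_tail_support, List.countP_cons,
      SimpleGraph.Walk.length_cons]
    have huv := hp u v h
    by_cases hv : p v
    · rw [if_pos hv] at ih
      rw [if_neg fun hu ↦ huv.mp hu hv, if_pos (decide_eq_true hv)]
      lia
    · rw [if_neg hv] at ih
      rw [if_pos (huv.mpr hv), if_neg (by simpa using hv)]
      lia

theorem isCycle_length_le_two_mul_card {V : Type*} [Fintype V] {G : SimpleGraph V} {p : V → Prop}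
    [DecidablePred p] (hp : ∀ u v, G.Adj u v → (p u ↔ ¬p v)) {u : V} {w : G.Walk u u}
    (hw : w.IsCycle) : w.length ≤ 2 * Fintype.card {v // p v} := by
  classical
  rw [← add_right_cancel (two_mul_countP_support_tail_add hp w), List.countP_eq_length_filter,
    ← List.toFinset_card_of_nodup (hw.support_nodup.filter _), Fintype.card_subtype]
  gcongr
  intro v hv
  simpa using (List.mem_filter.mp (List.mem_toFinset.mp hv)).2

namespace SignedGraph

variable {V : Type*} (Γ : SignedGraph V)

theorem adj_of_sign_ne_zero {u v : V} (h : Γ.sign u v ≠ 0) : Γ.G.Adj u v :=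
  not_imp_comm.mp (Γ.sign_nonedge u v) h

theorem sign_eq_zero_or (u v : V) : Γ.sign u v = 0 ∨ Γ.sign u v = 1 ∨ Γ.sign u v = -1 := by
  by_cases h : Γ.G.Adj u v
  · exact .inr (Γ.sign_edge u v h)
  · exact .inl (Γ.sign_nonedge u v h)

theorem sign_eq_one_of_pos {u v : V} (h : 0 < Γ.sign u v) : Γ.sign u v = 1 := by
  rcases Γ.sign_eq_zero_or u v with h' | h' | h' <;> linarith

theorem isSymm_adjMatrix : Γ.adjMatrix.IsSymm :=
  IsSymm.ext fun u v ↦ Γ.sign_symm v u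

theorem adjMatrix_apply_self (v : V) : Γ.adjMatrix v v = 0 :=
  Γ.sign_nonedge v v (Γ.G.loopless.irrefl v)

section Switch

variable {ε : V → ℝ} (hε : IsSignVector ε)

/-- The signed graph obtained by reversing the signs of all edges across the cut between the
vertices with `ε = 1` and those with `ε = -1`. -/
abbrev switch : SignedGraph V where
  G := Γ.G
  sign u v := ε u * Γ.sign u v * ε v
  sign_symm u v := by rw [Γ.sign_symm]; ring
  sign_edge u v h := by
    rcases hε u with hu | hu <;> rcases hε v with hv | hv <;>
      rcases Γ.sign_edge u v h with h | h <;> norm_num [hu, hv, h]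
  sign_nonedge u v h := by rw [Γ.sign_nonedge u v h, mul_zero, zero_mul]

theorem prod_map_edgeSign_switch {u v : V} (w : Γ.G.Walk u v) :
    (w.edges.map (Γ.switch hε).edgeSign).prod = ε u * (w.edges.map Γ.edgeSign).prod * ε v := by
  induction w with
  | @nil u => simp [hε.apply_mul_self u]
  | @cons u v t h w ih =>
    simp only [SimpleGraph.Walk.edges_cons, List.map_cons, List.prod_cons, ih]
    simp only [edgeSign, Sym2.lift_mk]
    linear_combination (ε u * Γ.sign u v * (w.edges.map (Sym2.lift ⟨Γ.sign, Γ.sign_symm⟩)).prod *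
      ε t) * hε.apply_mul_self v

theorem isNegCycle_switch {u : V} {w : Γ.G.Walk u u} :
    (Γ.switch hε).IsNegCycle w ↔ Γ.IsNegCycle w := by
  refine and_congr_right' ?_
  rw [Γ.prod_map_edgeSign_switch hε, mul_right_comm, hε.apply_mul_self, one_mul]

variable {Γ} in
theorem Unbalanced.switch (hU : Γ.Unbalanced) : (Γ.switch hε).Unbalanced := by
  obtain ⟨u, w, hw⟩ := hU
  exact ⟨u, w, (Γ.isNegCycle_switch hε).mpr hw⟩

end Switch

variable {Γ}

theorem Unbalanced.exists_sign_eq_neg_one (hU : Γ.Unbalanced) : ∃ u v, Γ.sign u v = -1 := by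
  by_contra! hpos
  obtain ⟨u, w, -, hw⟩ := hU
  rw [List.prod_eq_one] at hw
  · norm_num at hw
  simp only [List.mem_map]
  rintro _ ⟨⟨a, b⟩, he, rfl⟩
  exact (Γ.sign_edge a b (w.adj_of_mem_edges he)).resolve_right (hpos a b)

variable {p : V → Prop}

theorem Unbalanced.three_le_card [Fintype V] [DecidablePred p] (hU : Γ.Unbalanced)
    (hC4 : ∀ (u : V) (w : Γ.G.Walk u u), Γ.IsNegCycle w → w.length ≠ 4)
    (hp : ∀ u v, Γ.G.Adj u v → (p u ↔ ¬p v)) : 3 ≤ Fintype.card {v // p v} := by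
  obtain ⟨u, w, hw⟩ := hU
  have hle := isCycle_length_le_two_mul_card hp hw.1
  have heven := add_right_cancel (two_mul_countP_support_tail_add hp w)
  have := hw.1.three_le_length
  have := hC4 u w hw
  lia

variable (Γ p) in
/-- The biadjacency matrix of a signed graph whose edges all join a vertex satisfying `p` to a
vertex not satisfying `p`. -/
def biadjMatrix : Matrix {v // p v} {v // ¬p v} ℝ :=
  Matrix.of fun u v ↦ Γ.sign u v

theorem submatrix_adjMatrix_sumCompl [DecidablePred p] (hp : ∀ u v, Γ.G.Adj u v → (p u ↔ ¬p v)) :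
    Γ.adjMatrix.submatrix (Equiv.sumCompl p) (Equiv.sumCompl p) =
      fromBlocks 0 (Γ.biadjMatrix p) (Γ.biadjMatrix p)ᵀ 0 := by
  ext (a | a) (b | b)
  · exact Γ.sign_nonedge _ _ fun h ↦ (hp _ _ h).mp a.2 b.2
  · rfl
  · exact Γ.sign_symm _ _
  · exact Γ.sign_nonedge _ _ fun h ↦ a.2 ((hp _ _ h).mpr b.2)

theorem isSingularPair_biadjMatrix [Fintype V] [DecidablePred p]
    (hp : ∀ u v, Γ.G.Adj u v → (p u ↔ ¬p v)) {ρ : ℝ} {x : V → ℝ} (hx0 : x ≠ 0)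
    (hx : Γ.adjMatrix *ᵥ x = ρ • x) :
    IsSingularPair (Γ.biadjMatrix p) ρ (fun a ↦ x a) (fun b ↦ x b) := by
  have hz : Sum.elim (fun a : {v // p v} ↦ x a) (fun b : {v // ¬p v} ↦ x b)
      = x ∘ Equiv.sumCompl p := by
    ext (a | b) <;> rfl
  rw [isSingularPair_iff_fromBlocks, hz, ← submatrix_adjMatrix_sumCompl hp,
    submatrix_mulVec_equiv]
  refine ⟨fun h ↦ hx0 ?_, ?_⟩
  · rwa [(Equiv.sumCompl p).surjective.injective_comp_right.eq_iff' (Pi.zero_comp _)] at h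
  · rw [Function.comp_assoc, Equiv.self_comp_symm, Function.comp_id, hx]
    rfl

theorem isNegCycle_of_sign_mul_eq_neg_one {a a' b b' : V} (hab : Γ.G.Adj a b)
    (hba' : Γ.G.Adj b a') (hab' : Γ.G.Adj a' b') (hba : Γ.G.Adj b' a) (ha : a ≠ a') (hb : b ≠ b')
    (h : Γ.sign a b * Γ.sign b a' * Γ.sign a' b' * Γ.sign b' a = -1) :
    Γ.IsNegCycle (.cons hab (.cons hba' (.cons hab' (.cons hba .nil)))) := by
  refine ⟨?_, ?_⟩
  · have := hab.ne
    have := hba'.ne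
    have := hab'.ne
    have := hba.ne
    simp only [SimpleGraph.Walk.cons_isCycle_iff, SimpleGraph.Walk.isPath_def,
      SimpleGraph.Walk.support_cons, SimpleGraph.Walk.support_nil, SimpleGraph.Walk.edges_cons,
      SimpleGraph.Walk.edges_nil]
    grind
  · simpa [edgeSign, mul_assoc] using h

theorem isQuadBalanced_biadjMatrix
    (hC4 : ∀ (u : V) (w : Γ.G.Walk u u), Γ.IsNegCycle w → w.length ≠ 4) (p : V → Prop) :
    IsQuadBalanced (Γ.biadjMatrix p) where
  entry a b := Γ.sign_eq_zero_or a b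
  quad {a a' b b'} ha hb h := by
    have hne : Γ.sign a b * Γ.sign a' b * Γ.sign a' b' * Γ.sign a b' ≠ 0 :=
      h.trans_ne (by norm_num)
    simp only [mul_ne_zero_iff] at hne
    obtain ⟨⟨⟨h1, h2⟩, h3⟩, h4⟩ := hne
    refine hC4 a _ (isNegCycle_of_sign_mul_eq_neg_one (Γ.adj_of_sign_ne_zero h1)
      (Γ.adj_of_sign_ne_zero h2).symm (Γ.adj_of_sign_ne_zero h3) (Γ.adj_of_sign_ne_zero h4).symm
      (Subtype.coe_injective.ne ha) (Subtype.coe_injective.ne hb) ?_) rfl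
    rw [Γ.sign_symm b a', Γ.sign_symm b' a]
    exact h

end SignedGraph

/-- Two signed graphs, given by their adjacency matrices, are switching isomorphic. -/
def IsSwitchingIso {V W : Type*} (A : Matrix V V ℝ) (B : Matrix W W ℝ) : Prop :=
  ∃ (e : V ≃ W) (ε : V → ℝ), IsSignVector ε ∧ ∀ a b, A a b = ε a * B (e a) (e b) * ε b

namespace IsSwitchingIso

variable {V W U : Type*} {A : Matrix V V ℝ} {B : Matrix W W ℝ} {C : Matrix U U ℝ}

theorem of_submatrix_eq (e : W ≃ V) (h : A.submatrix e e = B) : IsSwitchingIso A B :=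
  ⟨e.symm, 1, fun _ ↦ .inl rfl, fun a b ↦ by simp [← h]⟩

theorem of_switch (Γ : SignedGraph V) {ε : V → ℝ} (hε : IsSignVector ε) :
    IsSwitchingIso Γ.adjMatrix (Γ.switch hε).adjMatrix := by
  refine ⟨Equiv.refl V, ε, hε, fun a b ↦ ?_⟩
  simp only [SignedGraph.adjMatrix, of_apply, Equiv.refl_apply]
  linear_combination -(ε b * ε b * Γ.sign a b) * hε.apply_mul_self a
    - Γ.sign a b * hε.apply_mul_self b

theorem trans (hAB : IsSwitchingIso A B) (hBC : IsSwitchingIso B C) : IsSwitchingIso A C := by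
  obtain ⟨e, ε, hε, hAB⟩ := hAB
  obtain ⟨f, δ, hδ, hBC⟩ := hBC
  refine ⟨e.trans f, fun a ↦ ε a * δ (e a), fun a ↦ ?_, fun a b ↦ ?_⟩
  · rcases hε a with h | h <;> rcases hδ (e a) with h' | h' <;> norm_num [h, h']
  · rw [hAB, hBC, Equiv.trans_apply, Equiv.trans_apply]
    ring

theorem exists_mulVec_eq_smul [Fintype V] [Fintype W] (hAB : IsSwitchingIso A B) {θ : ℝ}
    {z : W → ℝ} (hz0 : z ≠ 0) (hz : B *ᵥ z = θ • z) : ∃ x ≠ 0, A *ᵥ x = θ • x := by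
  obtain ⟨e, ε, hε, hAB⟩ := hAB
  refine ⟨ε * z ∘ e, hε.mul_ne_zero fun h ↦ hz0 ?_,
    hε.mulVec_mul_eq_smul (A := B.submatrix e e) hAB ?_⟩
  · rwa [e.surjective.injective_comp_right.eq_iff' (Pi.zero_comp _)] at h
  · rw [submatrix_mulVec_equiv, Function.comp_assoc, Equiv.self_comp_symm, Function.comp_id, hz]
    rfl

end IsSwitchingIso

theorem isSwitchingIso_fromBlocks_transpose {X Y : Type*} (S : Matrix X Y ℝ) :
    IsSwitchingIso (fromBlocks 0 S Sᵀ 0) (fromBlocks 0 Sᵀ S 0) :=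
  .of_submatrix_eq (Equiv.sumComm Y X) (by ext (a | a) (b | b) <;> rfl)

theorem exists_equiv_apply_eq_apply_eq {X W : Type*} (h : Nonempty (X ≃ W)) {p q : X} (hpq : p ≠ q)
    {i j : W} (hij : i ≠ j) : ∃ e : X ≃ W, e p = i ∧ e q = j := by
  obtain ⟨e⟩ := h
  obtain ⟨g, hgp, hgq⟩ := MulAction.is_two_pretransitive_iff.mp
    (Equiv.Perm.isMultiplyPretransitive W 2) (e.injective.ne hpq) hij
  exact ⟨e.trans g, hgp, hgq⟩

section NegEdgeBiadj

variable {X Y : Type*} [DecidableEq X] [DecidableEq Y] {u u₀ : X} {v v₀ : Y}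

theorem negEdgeBiadj_singleton_apply (hu : u₀ ≠ u) (hv : v₀ ≠ v) (a : X) (b : Y) :
    negEdgeBiadj u v {u₀} {v₀} a b =
      if a = u then (if b = v₀ then 1 else if b = v then -1 else 0)
      else if a = u₀ then (if b = v₀ then 0 else 1) else if b = v then 0 else 1 := by
  have hu' := hu.symm
  have hv' := hv.symm
  split_ifs <;> simp_all [negEdgeBiadj, vecMulVec_apply, signedNbr_apply, Pi.single_apply]

theorem submatrix_negEdgeBiadj_singleton {X' Y' : Type*} [DecidableEq X'] [DecidableEq Y']
    (e : X ≃ X') (f : Y ≃ Y') :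
    (negEdgeBiadj (e u) (f v) {e u₀} {f v₀}).submatrix e f = negEdgeBiadj u v {u₀} {v₀} := by
  ext a b
  simp [negEdgeBiadj, vecMulVec_apply, signedNbr_apply, Pi.single_apply]

theorem exists_gammaMatrix_eq_fromBlocks {r s : ℕ} (hr : 2 ≤ r) (hs : 2 ≤ s) :
    ∃ (u u₀ : Fin r) (v v₀ : Fin s), u₀ ≠ u ∧ v₀ ≠ v ∧ gammaMatrix r s =
      fromBlocks 0 (negEdgeBiadj u v {u₀} {v₀}) (negEdgeBiadj u v {u₀} {v₀})ᵀ 0 := by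
  have hu : (⟨0, by lia⟩ : Fin r) ≠ ⟨r - 1, by lia⟩ := by simp; lia
  have hv : (⟨0, by lia⟩ : Fin s) ≠ ⟨s - 1, by lia⟩ := by simp; lia
  refine ⟨_, _, _, _, hu, hv, ?_⟩
  have hsign (x : Fin r) (y : Fin s) :
      negEdgeBiadj ⟨r - 1, by lia⟩ ⟨s - 1, by lia⟩ {⟨0, by lia⟩} {⟨0, by lia⟩} x y
        = gammaSign r s x y := by
    simp only [negEdgeBiadj_singleton_apply hu hv, gammaSign, Fin.ext_iff]
  ext (a | a) (b | b)
  · rfl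
  · exact (hsign a b).symm
  · exact (hsign b a).symm
  · rfl

variable [Fintype X] [Fintype Y]

theorem isSwitchingIso_gammaMatrix (hu : u₀ ≠ u) (hv : v₀ ≠ v) :
    IsSwitchingIso (fromBlocks 0 (negEdgeBiadj u v {u₀} {v₀}) (negEdgeBiadj u v {u₀} {v₀})ᵀ 0)
      (gammaMatrix (Fintype.card X) (Fintype.card Y)) := by
  obtain ⟨p, p₀, q, q₀, hp, hq, hΓ⟩ := exists_gammaMatrix_eq_fromBlocks
    (Fintype.one_lt_card_iff.mpr ⟨u₀, u, hu⟩) (Fintype.one_lt_card_iff.mpr ⟨v₀, v, hv⟩)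
  obtain ⟨e, rfl, rfl⟩ := exists_equiv_apply_eq_apply_eq ⟨Fintype.equivFin X⟩ hu hp
  obtain ⟨f, rfl, rfl⟩ := exists_equiv_apply_eq_apply_eq ⟨Fintype.equivFin Y⟩ hv hq
  refine .of_submatrix_eq (Equiv.sumCongr e f).symm ?_
  rw [hΓ, ← submatrix_negEdgeBiadj_singleton e f]
  ext (a | a) (b | b) <;> simp

end NegEdgeBiadj

theorem exists_gammaMatrix_mulVec_eq_smul {n : ℕ} (hn : 6 ≤ n) :
    ∃ z ≠ 0, gammaMatrix (n / 2) (n - n / 2) *ᵥ z = turanBound n • z := by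
  obtain ⟨u, u₀, v, v₀, hu, hv, hΓ⟩ :=
    exists_gammaMatrix_eq_fromBlocks (by lia : 2 ≤ n / 2) (by lia : 2 ≤ n - n / 2)
  obtain ⟨x, y, hxy⟩ := (exists_isSingularPair_negEdgeBiadj_singleton_iff hu hv
    (by linarith [one_le_turanBound hn])).mpr
      (by simpa only [Fintype.card_fin] using gammaPoly_turanBound hn)
  rw [hΓ]
  exact ⟨_, isSingularPair_iff_fromBlocks.mp hxy⟩

section MaximalSingularValue

variable {X Y : Type*} [Fintype X] [Fintype Y] {θ : ℝ} {x : X → ℝ} {y : Y → ℝ} {u u₀ : X} {v v₀ : Y}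

theorem le_turanBound_of_isSingularPair_negEdgeBiadj [DecidableEq X] [DecidableEq Y] (hu : u₀ ≠ u)
    (hv : v₀ ≠ v) (hX : 3 ≤ Fintype.card X) (hY : 3 ≤ Fintype.card Y)
    (h : IsSingularPair (negEdgeBiadj u v {u₀} {v₀}) θ x y) :
    θ ≤ turanBound (Fintype.card X + Fintype.card Y) := by
  obtain rfl | hθ := eq_or_ne θ 0
  · exact turanBound_nonneg (by lia)
  · exact le_turanBound_of_gammaPoly_eq_zero hX hY
      ((exists_isSingularPair_negEdgeBiadj_singleton_iff hu hv hθ).mp ⟨x, y, h⟩)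

theorem isSwitchingIso_gammaMatrix_half [DecidableEq X] [DecidableEq Y] (hu : u₀ ≠ u)
    (hv : v₀ ≠ v) (hX : 3 ≤ Fintype.card X) (hY : 3 ≤ Fintype.card Y) {n : ℕ}
    (hn : Fintype.card X + Fintype.card Y = n)
    (h : IsSingularPair (negEdgeBiadj u v {u₀} {v₀}) (turanBound n) x y) :
    IsSwitchingIso (fromBlocks 0 (negEdgeBiadj u v {u₀} {v₀}) (negEdgeBiadj u v {u₀} {v₀})ᵀ 0)
      (gammaMatrix (n / 2) (n - n / 2)) := by
  have hpoly := (exists_isSingularPair_negEdgeBiadj_singleton_iff hu hv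
    (one_pos.trans_le (one_le_turanBound (by lia))).ne').mp ⟨x, y, h⟩
  by_cases hX' : Fintype.card X = n / 2
  · rw [← hX', ← hn, Nat.add_sub_cancel_left]
    exact isSwitchingIso_gammaMatrix hu hv
  by_cases hY' : Fintype.card Y = n / 2
  · rw [← hY', ← hn, Nat.add_sub_cancel]
    refine (isSwitchingIso_fromBlocks_transpose _).trans ?_
    have hiso := isSwitchingIso_gammaMatrix hv hu
    rwa [← transpose_negEdgeBiadj, transpose_transpose] at hiso
  · subst hn
    exact absurd rfl (lt_turanBound_of_gammaPoly_eq_zero hX hY hpoly hX' hY').ne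

namespace IsQuadBalanced

variable {B : Matrix X Y ℝ}

theorem le_turanBound (hB : IsQuadBalanced B) (h : IsSingularPair B θ x y) (hθ : 1 ≤ θ)
    (hx : ∀ a, 0 ≤ x a) (hy : ∀ b, 0 ≤ y b) (huv : B u v = -1) (hu₀ : B u₀ v = 1)
    (hv₀ : B u v₀ = 1) (hX : 3 ≤ Fintype.card X) (hY : 3 ≤ Fintype.card Y) :
    θ ≤ turanBound (Fintype.card X + Fintype.card Y) := by
  classical
  refine hB.le_of_forall_isSingularPair_le h hθ hx hy huv hu₀ hv₀ fun η x' y' hη ↦ ?_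
  refine le_turanBound_of_isSingularPair_negEdgeBiadj ?_ ?_ hX hY hη
  · rintro rfl; norm_num [huv] at hu₀
  · rintro rfl; norm_num [huv] at hv₀

theorem isSwitchingIso_gammaMatrix (hB : IsQuadBalanced B) {n : ℕ}
    (hn : Fintype.card X + Fintype.card Y = n) (h : IsSingularPair B (turanBound n) x y)
    (hx : ∀ a, 0 ≤ x a) (hy : ∀ b, 0 ≤ y b) (huv : B u v = -1) (hu₀ : B u₀ v = 1)
    (hv₀ : B u v₀ = 1) (hX : 3 ≤ Fintype.card X) (hY : 3 ≤ Fintype.card Y) :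
    IsSwitchingIso (fromBlocks 0 B Bᵀ 0) (gammaMatrix (n / 2) (n - n / 2)) := by
  classical
  have hu : u₀ ≠ u := by rintro rfl; norm_num [huv] at hu₀
  have hv : v₀ ≠ v := by rintro rfl; norm_num [huv] at hv₀
  have hBeq := hB.eq_negEdgeBiadj_singleton h (one_le_turanBound (by lia)) hx hy huv hu₀ hv₀
    fun η x' y' hη ↦ hn ▸ le_turanBound_of_isSingularPair_negEdgeBiadj hu hv hX hY hη
  rw [hBeq] at h ⊢
  exact isSwitchingIso_gammaMatrix_half hu hv hX hY hn h

end IsQuadBalanced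
end MaximalSingularValue

namespace SignedGraph

variable {V : Type*} {Γ : SignedGraph V} {p : V → Prop}

theorem exists_biadjMatrix_eq_neg_one (hp : ∀ u v, Γ.G.Adj u v → (p u ↔ ¬p v)) (hU : Γ.Unbalanced) :
    ∃ u v, Γ.biadjMatrix p u v = -1 := by
  obtain ⟨u, v, huv⟩ := hU.exists_sign_eq_neg_one
  have hadj : Γ.G.Adj u v := Γ.adj_of_sign_ne_zero (by norm_num [huv])
  by_cases hu : p u
  · exact ⟨⟨u, hu⟩, ⟨v, (hp u v hadj).mp hu⟩, huv⟩
  · exact ⟨⟨v, (hp v u hadj.symm).mpr hu⟩, ⟨u, hu⟩, (Γ.sign_symm v u).trans huv⟩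

/-- Every vertex on a negative edge also lies on a positive edge. Some switching of any signed graph
has this property. -/
def PositiveAtNegativeEdges (Γ : SignedGraph V) : Prop :=
  ∀ u w, Γ.sign u w < 0 → ∃ v, 0 < Γ.sign u v

theorem PositiveAtNegativeEdges.exists_biadjMatrix_eq_one
    (hΓ : Γ.PositiveAtNegativeEdges) (hp : ∀ u v, Γ.G.Adj u v → (p u ↔ ¬p v))
    {u : {v // p v}} {v : {v // ¬p v}} (huv : Γ.biadjMatrix p u v = -1) :
    ∃ u₀ v₀, Γ.biadjMatrix p u₀ v = 1 ∧ Γ.biadjMatrix p u v₀ = 1 := by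
  have hneg : Γ.sign u v < 0 := lt_of_eq_of_lt huv (by norm_num)
  obtain ⟨u₀, hu₀⟩ := hΓ v u (Γ.sign_symm u v ▸ hneg)
  obtain ⟨v₀, hv₀⟩ := hΓ u v hneg
  refine ⟨⟨u₀, (hp _ _ (Γ.adj_of_sign_ne_zero hu₀.ne').symm).mpr v.2⟩,
    ⟨v₀, (hp _ _ (Γ.adj_of_sign_ne_zero hv₀.ne')).mp u.2⟩, ?_, ?_⟩
  · exact (Γ.sign_symm _ _).trans (Γ.sign_eq_one_of_pos hu₀)
  · exact Γ.sign_eq_one_of_pos hv₀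

variable [Fintype V] {n : ℕ} {ρ : ℝ} {x : V → ℝ}

theorem le_turanBound_and_isSwitchingIso_of_nonneg (hn : Fintype.card V = n)
    (hp : ∀ u v, Γ.G.Adj u v → (p u ↔ ¬p v)) (hU : Γ.Unbalanced)
    (hC4 : ∀ (u : V) (w : Γ.G.Walk u u), Γ.IsNegCycle w → w.length ≠ 4)
    (hΓ : Γ.PositiveAtNegativeEdges) (hρ : 1 ≤ ρ) (hx0 : x ≠ 0) (hxnn : 0 ≤ x)
    (hx : Γ.adjMatrix *ᵥ x = ρ • x) :
    ρ ≤ turanBound n ∧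
      (ρ = turanBound n → IsSwitchingIso Γ.adjMatrix (gammaMatrix (n / 2) (n - n / 2))) := by
  classical
  obtain ⟨u, v, huv⟩ := exists_biadjMatrix_eq_neg_one hp hU
  obtain ⟨u₀, v₀, hu₀, hv₀⟩ := hΓ.exists_biadjMatrix_eq_one hp huv
  have hB := isQuadBalanced_biadjMatrix hC4 p
  have hpair := isSingularPair_biadjMatrix hp hx0 hx
  have hX := hU.three_le_card hC4 hp
  have hY := hU.three_le_card hC4 (p := fun v ↦ ¬p v) (fun u v h ↦ not_congr (hp u v h))
  have hV : Fintype.card {v // p v} + Fintype.card {v // ¬p v} = n := by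
    rw [← hn, ← Fintype.card_sum, Fintype.card_congr (Equiv.sumCompl p)]
  refine ⟨?_, fun h ↦ ?_⟩
  · exact hV ▸ hB.le_turanBound hpair hρ (fun a ↦ hxnn a) (fun b ↦ hxnn b) huv hu₀ hv₀ hX hY
  · refine (IsSwitchingIso.of_submatrix_eq _ (submatrix_adjMatrix_sumCompl hp)).trans ?_
    exact hB.isSwitchingIso_gammaMatrix hV (h ▸ hpair) (fun a ↦ hxnn a) (fun b ↦ hxnn b) huv hu₀
      hv₀ hX hY

theorem le_turanBound_and_isSwitchingIso (hn : Fintype.card V = n)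
    (hp : ∀ u v, Γ.G.Adj u v → (p u ↔ ¬p v)) (hU : Γ.Unbalanced)
    (hC4 : ∀ (u : V) (w : Γ.G.Walk u u), Γ.IsNegCycle w → w.length ≠ 4)
    (hρ : 1 ≤ ρ) (hx0 : x ≠ 0) (hx : Γ.adjMatrix *ᵥ x = ρ • x) :
    ρ ≤ turanBound n ∧
      (ρ = turanBound n → IsSwitchingIso Γ.adjMatrix (gammaMatrix (n / 2) (n - n / 2))) := by
  obtain ⟨ε, hε, hεx, hpos⟩ := exists_isSignVector_forall_exists_pos Γ.isSymm_adjMatrix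
    Γ.adjMatrix_apply_self (by linarith) hx
  obtain ⟨hle, heq⟩ := le_turanBound_and_isSwitchingIso_of_nonneg (Γ := Γ.switch hε) hn hp
    (hU.switch hε) (fun u w hw ↦ hC4 u w ((Γ.isNegCycle_switch hε).mp hw)) hpos hρ
    (hε.mul_ne_zero hx0) hεx (hε.mulVec_mul_eq_smul (fun _ _ ↦ rfl) hx)
  exact ⟨hle, fun h ↦ (IsSwitchingIso.of_switch Γ hε).trans (heq h)⟩

theorem exists_mulVec_eq_abs_smul (hp : ∀ u v, Γ.G.Adj u v → (p u ↔ ¬p v)) (hx0 : x ≠ 0)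
    (hx : Γ.adjMatrix *ᵥ x = ρ • x) : ∃ z ≠ 0, Γ.adjMatrix *ᵥ z = |ρ| • z := by
  classical
  obtain h | h := abs_choice ρ
  · exact ⟨x, hx0, h.symm ▸ hx⟩
  have hδ : IsSignVector fun v ↦ if p v then (1 : ℝ) else -1 := fun v ↦ ite_eq_or_eq _ _ _
  have hneg (a b : V) : (-Γ.adjMatrix) a b =
      (if p a then (1 : ℝ) else -1) * Γ.adjMatrix a b * (if p b then 1 else -1) := by
    by_cases hab : Γ.G.Adj a b
    · by_cases hb : p b <;> simp [hp a b hab, hb]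
    · simp [adjMatrix, Γ.sign_nonedge a b hab]
  refine ⟨_, hδ.mul_ne_zero hx0, ?_⟩
  rw [h, neg_smul, ← hδ.mulVec_mul_eq_smul hneg hx, neg_mulVec, neg_neg]

theorem abs_le_turanBound_and_isSwitchingIso (hn : Fintype.card V = n) (hn6 : 6 ≤ n)
    (hp : ∀ u v, Γ.G.Adj u v → (p u ↔ ¬p v)) (hU : Γ.Unbalanced)
    (hC4 : ∀ (u : V) (w : Γ.G.Walk u u), Γ.IsNegCycle w → w.length ≠ 4)
    (hx0 : x ≠ 0) (hx : Γ.adjMatrix *ᵥ x = ρ • x) :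
    |ρ| ≤ turanBound n ∧
      (|ρ| = turanBound n → IsSwitchingIso Γ.adjMatrix (gammaMatrix (n / 2) (n - n / 2))) := by
  obtain hlt | hge := lt_or_ge |ρ| 1
  · have hlt' := hlt.trans_le (one_le_turanBound hn6)
    exact ⟨hlt'.le, fun h ↦ absurd h hlt'.ne⟩
  · obtain ⟨z, hz0, hz⟩ := exists_mulVec_eq_abs_smul hp hx0 hx
    exact le_turanBound_and_isSwitchingIso hn hp hU hC4 hge hz0 hz

end SignedGraph

/-- Spectral Turán theorem by order: an unbalanced signed bipartite graph of order
`n ≥ 6` with no negative 4-cycle has spectral radius at most the stated bound, with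
equality iff it is switching isomorphic to `Γ_{⌊n/2⌋, ⌈n/2⌉}`. -/
theorem spectral_turan_order {V : Type*} [Fintype V] [DecidableEq V] [Nonempty V]
    (Γ : SignedGraph V) (n : ℕ) (hn : 6 ≤ n) (hcard : Fintype.card V = n)
    (c : V → Bool) (hc : ∀ u v, Γ.G.Adj u v → c u ≠ c v)
    (hU : Γ.Unbalanced)
    (hC4 : ∀ (u : V) (w : Γ.G.Walk u u), Γ.IsNegCycle w → w.length ≠ 4)
    (hA : Γ.adjMatrix.IsHermitian) :
    Finset.univ.sup' Finset.univ_nonempty (fun i => |hA.eigenvalues i|) ≤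
      (if Even n then ((n : ℝ) - 6 + Real.sqrt (((n : ℝ) - 2) * ((n : ℝ) + 6))) / 4
      else Real.sqrt ((((n : ℝ) ^ 2 - 4 * (n : ℝ) + 11) +
        Real.sqrt (((n : ℝ) ^ 2 - 4 * (n : ℝ) + 11) ^ 2 -
          64 * ((n : ℝ) - 2) * ((n : ℝ) - 4))) / 8)) ∧
    (Finset.univ.sup' Finset.univ_nonempty (fun i => |hA.eigenvalues i|) =
      (if Even n then ((n : ℝ) - 6 + Real.sqrt (((n : ℝ) - 2) * ((n : ℝ) + 6))) / 4
      else Real.sqrt ((((n : ℝ) ^ 2 - 4 * (n : ℝ) + 11) +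
        Real.sqrt (((n : ℝ) ^ 2 - 4 * (n : ℝ) + 11) ^ 2 -
          64 * ((n : ℝ) - 2) * ((n : ℝ) - 4))) / 8)) ↔
      ∃ (e : V ≃ (Fin (n / 2) ⊕ Fin (n - n / 2))) (ε : V → ℝ),
        (∀ v, ε v = 1 ∨ ε v = -1) ∧
        ∀ a b, Γ.sign a b = ε a * gammaMatrix (n / 2) (n - n / 2) (e a) (e b) * ε b) := by
  have hp (u v : V) (huv : Γ.G.Adj u v) : c u = true ↔ ¬c v = true := by
    rw [Bool.not_eq_true, Bool.eq_not.mpr (hc u v huv), Bool.not_eq_true']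
  change _ ≤ turanBound n ∧
    (_ = turanBound n ↔ IsSwitchingIso Γ.adjMatrix (gammaMatrix (n / 2) (n - n / 2)))
  obtain ⟨i, -, hi⟩ := exists_mem_eq_sup' univ_nonempty fun i ↦ |hA.eigenvalues i|
  obtain ⟨x, hx0, hx⟩ := exists_mulVec_eq_eigenvalue_smul hA i
  obtain ⟨hle, hiso⟩ :=
    SignedGraph.abs_le_turanBound_and_isSwitchingIso hcard hn hp hU hC4 hx0 hx
  rw [← hi] at hle hiso
  refine ⟨hle, hiso, fun h ↦ hle.antisymm ?_⟩
  obtain ⟨z, hz0, hz⟩ := exists_gammaMatrix_mulVec_eq_smul hn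
  obtain ⟨y, hy0, hy⟩ := h.exists_mulVec_eq_smul hz0 hz
  obtain ⟨j, hj⟩ := exists_eigenvalues_eq_of_mulVec_eq_smul hA hy0 hy
  calc turanBound n ≤ |hA.eigenvalues j| := hj ▸ le_abs_self _
    _ ≤ _ := le_sup' (fun i ↦ |hA.eigenvalues i|) (mem_univ j)
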